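/- arXiv:2507.21031 — 3 statements merged into one kernel-verified Lean document; each statement's English description precedes it below -/
import Mathlib

section
/- Let n, m ≥ 1, set N = 2n+2m and γ = γ_{2n,2m}. For π ∈ S_NC(2n,2m), the subgroup generated by π and the interval involution I_N acts transitively on {1,…,N} if and only if one of the following holds: (a) π⁻¹γ separates even numbers; or (b) there exist even numbers r ∈ {1,…,2n} and s ∈ {2n+1,…,N} lying in the same cycle of π⁻¹γ, such that whenever two distinct even numbers lie in a common cycle of π⁻¹γ, those two numbers are r and s. -/
noncomputable def cycleCount {N : ℕ} (π : Equiv.Perm (Fin N)) : ℕ :=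
  Set.ncard {O : Set (Fin N) | ∃ x, O = {y | π.SameCycle x y}}

noncomputable def cyclesIn {N : ℕ} (π : Equiv.Perm (Fin N)) (C : Set (Fin N)) : ℕ :=
  Set.ncard {O : Set (Fin N) | (∃ x, O = {y | π.SameCycle x y}) ∧ O ⊆ C}

/-- The annular permutation `γ_{p,q}` of `{1,…,p+q}` (0-indexed as `Fin (p+q)`),
with the two cycles `(1,…,p)` and `(p+1,…,p+q)`. -/
def annularGamma (p q : ℕ) : Equiv.Perm (Fin (p + q)) :=
  finSumFinEquiv.permCongr ((finRotate p).sumCongr (finRotate q))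

/-- The interval involution `I_N = (1 2)(3 4)⋯(N-1 N)` of `{1,…,N}`
(0-indexed: swaps `2i ↔ 2i+1`), for `N` even. -/
def intervalInvolution (N : ℕ) : Equiv.Perm (Fin N) :=
  Function.Involutive.toPerm
    (fun x => ⟨if x.val % 2 = 0 then min (x.val + 1) (N - 1) else x.val - 1, by
      rcases x with ⟨v, hv⟩
      dsimp only
      split <;> omega⟩)
    (by
      intro x
      rcases x with ⟨v, hv⟩
      apply Fin.ext
      dsimp only
      split_ifs <;> omega)

/-- The subgroup generated by `π` and `ρ` acts transitively on `Fin N`. -/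
def JointTrans {N : ℕ} (π ρ : Equiv.Perm (Fin N)) : Prop :=
  ∀ x y : Fin N, ∃ g ∈ Subgroup.closure ({π, ρ} : Set (Equiv.Perm (Fin N))), g x = y

/-- `α` separates even numbers: no cycle of `α` contains two distinct even numbers
(an element `x : Fin N` represents the number `x.val + 1`). -/
def SeparatesEven {N : ℕ} (α : Equiv.Perm (Fin N)) : Prop :=
  ∀ x y : Fin N, α.SameCycle x y → (x.val + 1) % 2 = 0 → (y.val + 1) % 2 = 0 → x = y

/-- `π ∈ S_NC(p,q)`: annular non-crossing permutations. -/
def AnnularNC (p q : ℕ) (π : Equiv.Perm (Fin (p + q))) : Prop :=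
  JointTrans π (annularGamma p q) ∧
    cycleCount π + cycleCount (π⁻¹ * annularGamma p q) = p + q

/-- `A` witnesses bipartiteness of the graph `G_π`: `π(A) = A` and for each `i`,
exactly one of the (1-indexed) numbers `2i-1`, `2i` belongs to `A`. -/
def BipartSet {N : ℕ} (π : Equiv.Perm (Fin N)) (A : Set (Fin N)) : Prop :=
  (⇑π) '' A = A ∧ ∀ i : ℕ, ∀ h : 2 * i + 1 < N,
    Xor' ((⟨2 * i, Nat.lt_of_succ_lt h⟩ : Fin N) ∈ A) ((⟨2 * i + 1, h⟩ : Fin N) ∈ A)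

/-- The graph `G_π` is bipartite. -/
def GraphBipartite {N : ℕ} (π : Equiv.Perm (Fin N)) : Prop :=
  ∃ A : Set (Fin N), BipartSet π A

/-- `π ∈ J_{2n,2m}`: annular non-crossing, bipartite graph, and `π⁻¹γ` separates even. -/
def memJ (n m : ℕ) (π : Equiv.Perm (Fin (2 * n + 2 * m))) : Prop :=
  AnnularNC (2 * n) (2 * m) π ∧ GraphBipartite π ∧
    SeparatesEven (π⁻¹ * annularGamma (2 * n) (2 * m))

/-!
Write `#s` for the number of classes of an equivalence relation, and identify a permutation with the
partition of its `N` points into cycles. Multiplying `β` by a transposition changes each term by at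
most one, and induction on `β` gives, for every equivalence relation `s`,
`#(s ⊔ βα) + #α + #β ≤ N + #(s ⊔ α) + #(α ⊔ β)`.

If `πκ = σρ`, this bounds `#(π ⊔ σ)` from above by `#(κ ⊔ ρ)`, and also from below, since
`κ⁻¹π⁻¹ = ρ⁻¹σ⁻¹`; when the four permutations have enough cycles the two bounds agree. For
`κ = π⁻¹γ`, `σ = I` and `ρ = I⁻¹γ` they do, so the orbits of `⟨π, I⟩` are counted by `#(κ ⊔ ρ)`.
As the cycles of `ρ` are the odd numbers and the sets of even numbers of the two cycles of `γ`,
`κ ⊔ ρ` arises from `κ` by merging all the classes that meet the first of these sets, then those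
that meet the second. There is one orbit exactly when both mergers lose as many classes as the
even numbers allow, that is, when the even numbers nowhere close up a circuit.
-/

open Equiv Equiv.Perm

section Setoid

variable {X : Type*} {s r : Setoid X} {S T : Set X}

/-- The number of classes of an equivalence relation (`0` if there are infinitely many). -/
noncomputable def numClasses (s : Setoid X) : ℕ := Nat.card (Quotient s)

/-- The equivalence relation obtained from `s` by merging all the classes that meet `S`. -/
def mergeClasses (s : Setoid X) (S : Set X) : Setoid X where
  r x y := s x y ∨ (∃ u ∈ S, s x u) ∧ ∃ v ∈ S, s y v
  iseqv :=
    { refl := fun x => Or.inl (s.refl' x)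
      symm := Or.imp s.symm' And.symm
      trans := by
        rintro x y z (hxy | ⟨hx, hy⟩) (hyz | ⟨⟨v, hv, hyv⟩, hz⟩)
        · exact Or.inl (s.trans' hxy hyz)
        · exact Or.inr ⟨⟨v, hv, s.trans' hxy hyv⟩, hz⟩
        · obtain ⟨w, hw, hyw⟩ := hy
          exact Or.inr ⟨hx, w, hw, s.trans' (s.symm' hyz) hyw⟩
        · exact Or.inr ⟨hx, hz⟩ }

theorem mergeClasses_apply {x y : X} :
    mergeClasses s S x y ↔ s x y ∨ (∃ u ∈ S, s x u) ∧ ∃ v ∈ S, s y v :=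
  Iff.rfl

theorem le_mergeClasses (s : Setoid X) (S : Set X) : s ≤ mergeClasses s S :=
  fun _ _ => Or.inl

theorem mergeClasses_of_mem (s : Setoid X) {u v : X} (hu : u ∈ S) (hv : v ∈ S) :
    mergeClasses s S u v :=
  Or.inr ⟨⟨u, hu, s.refl' u⟩, v, hv, s.refl' v⟩

theorem mergeClasses_le_iff : mergeClasses s S ≤ r ↔ s ≤ r ∧ ∀ u ∈ S, ∀ v ∈ S, r u v := by
  constructor
  · exact fun h => ⟨(le_mergeClasses s S).trans h, fun u hu v hv => h (mergeClasses_of_mem s hu hv)⟩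
  · rintro ⟨hs, hS⟩ x y (hxy | ⟨⟨u, hu, hxu⟩, v, hv, hyv⟩)
    · exact hs hxy
    · exact r.trans' (hs hxu) (r.trans' (hS u hu v hv) (r.symm' (hs hyv)))

theorem sup_mergeClasses (s r : Setoid X) (S : Set X) :
    s ⊔ mergeClasses r S = mergeClasses (s ⊔ r) S := by
  refine le_antisymm (sup_le (le_sup_left.trans (le_mergeClasses _ S)) ?_) ?_
  · exact mergeClasses_le_iff.2
      ⟨le_sup_right.trans (le_mergeClasses _ S), fun u hu v hv => mergeClasses_of_mem _ hu hv⟩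
  · exact mergeClasses_le_iff.2 ⟨sup_le_sup_left (le_mergeClasses r S) s,
      fun u hu v hv => (le_sup_right : _ ≤ s ⊔ mergeClasses r S) (mergeClasses_of_mem r hu hv)⟩

theorem mergeClasses_pair_le_iff {a b : X} : mergeClasses s {a, b} ≤ r ↔ s ≤ r ∧ r a b := by
  rw [mergeClasses_le_iff]
  refine and_congr_right fun _ => ⟨fun h => h a (by simp) b (by simp), fun h => ?_⟩
  rintro u (rfl | rfl) v (rfl | rfl)
  exacts [r.refl' _, h, r.symm' h, r.refl' _]

theorem injOn_quotientMk_iff :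
    S.InjOn (Quotient.mk s) ↔ ∀ x ∈ S, ∀ y ∈ S, s x y → x = y :=
  ⟨fun h _ hx _ hy hxy => h hx hy (Quotient.sound hxy),
    fun h x hx y hy hxy => h x hx y hy (Quotient.exact hxy)⟩

theorem numClasses_le_of_le [Finite X] (h : s ≤ r) : numClasses r ≤ numClasses s :=
  Nat.card_le_card_of_surjective (Quotient.map id fun _ _ hab => h hab)
    (Quotient.ind fun x => ⟨⟦x⟧, rfl⟩)

theorem numClasses_bot : numClasses (⊥ : Setoid X) = Nat.card X :=
  (Nat.card_congr (Equiv.ofBijective (Quotient.mk ⊥)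
    ⟨fun _ _ h => Quotient.exact h, Quotient.mk_surjective⟩)).symm

theorem numClasses_ker {Y : Type*} (f : X → Y) : numClasses (Setoid.ker f) = (Set.range f).ncard :=
  Nat.card_congr (Setoid.quotientKerEquivRange f)

theorem numClasses_eq_one_iff [Nonempty X] : numClasses s = 1 ↔ s = ⊤ := by
  rw [numClasses, Nat.card_eq_one_iff_unique, ← Quotient.subsingleton_iff]
  exact and_iff_left (Nonempty.map (Quotient.mk s) ‹_›)

theorem ncard_le_numClasses [Finite X] (h : S.InjOn (Quotient.mk s)) : S.ncard ≤ numClasses s := by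
  rw [← h.ncard_image]
  exact Set.ncard_le_card _

theorem numClasses_mergeClasses_add [Finite X] (s : Setoid X) (hS : S.Nonempty) :
    numClasses (mergeClasses s S) + (Quotient.mk s '' S).ncard = numClasses s + 1 := by
  classical
  set T := Quotient.mk s '' S
  have mem_T (x : X) : Quotient.mk s x ∈ T ↔ ∃ u ∈ S, s x u :=
    exists_congr fun u => and_congr_right fun _ => eq_comm.trans Quotient.eq
  let f (x : X) : Option (Quotient s) := if Quotient.mk s x ∈ T then none else some ⟦x⟧
  have merge_eq_ker : mergeClasses s S = Setoid.ker f := by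
    ext x y
    rw [mergeClasses_apply, ← mem_T, ← mem_T, Setoid.ker_def, ← Quotient.eq (r := s)]
    by_cases hx : Quotient.mk s x ∈ T <;> by_cases hy : Quotient.mk s y ∈ T <;> grind
  have range_f : Set.range f = insert none (some '' Tᶜ) := by
    obtain ⟨u, hu⟩ := hS
    ext (_ | q)
    · simpa [f] using ⟨u, u, hu, rfl⟩
    · induction q using Quotient.ind with | _ x =>
      simp only [Set.mem_range, Set.mem_insert_iff, reduceCtorEq, false_or, Set.mem_image,
        Option.some.injEq, exists_eq_right, f]
      constructor
      · rintro ⟨y, hy⟩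
        split_ifs at hy with hyT
        exact Option.some.inj hy ▸ hyT
      · exact fun hx => ⟨x, if_neg hx⟩
  have none_notMem : none ∉ some '' Tᶜ := by simp
  rw [merge_eq_ker, numClasses_ker, range_f, Set.ncard_insert_of_notMem none_notMem,
    Set.ncard_image_of_injective _ (Option.some_injective _), numClasses,
    ← Set.ncard_add_ncard_compl T]
  omega

theorem numClasses_mergeClasses_pair_add_one [Finite X] {a b : X} (h : ¬ s a b) :
    numClasses (mergeClasses s {a, b}) + 1 = numClasses s := by
  have hab : Quotient.mk s a ≠ Quotient.mk s b := fun e => h (Quotient.exact e)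
  have := numClasses_mergeClasses_add s (Set.insert_nonempty a {b})
  rw [Set.image_pair, Set.ncard_pair hab] at this
  omega

theorem numClasses_le_mergeClasses_pair_add_one [Finite X] (s : Setoid X) (a b : X) :
    numClasses s ≤ numClasses (mergeClasses s {a, b}) + 1 := by
  by_cases h : s a b
  · exact (numClasses_le_of_le (mergeClasses_pair_le_iff.2 ⟨le_rfl, h⟩)).trans (Nat.le_succ _)
  · exact (numClasses_mergeClasses_pair_add_one h).ge

theorem numClasses_mergeClasses_mergeClasses_add_iff [Finite X] (s : Setoid X)
    (hS : S.Nonempty) (hT : T.Nonempty) :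
    numClasses (mergeClasses (mergeClasses s S) T) + S.ncard + T.ncard = numClasses s + 2 ↔
      S.InjOn (Quotient.mk s) ∧ T.InjOn (Quotient.mk (mergeClasses s S)) := by
  rw [← Set.ncard_image_iff, ← Set.ncard_image_iff]
  have hcS := numClasses_mergeClasses_add s hS
  have hcT := numClasses_mergeClasses_add (mergeClasses s S) hT
  have hleS : (Quotient.mk s '' S).ncard ≤ S.ncard := Set.ncard_image_le
  have hleT : (Quotient.mk (mergeClasses s S) '' T).ncard ≤ T.ncard := Set.ncard_image_le
  omega

theorem injOn_quotientMk_mergeClasses_iff :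
    T.InjOn (Quotient.mk (mergeClasses s S)) ↔
      T.InjOn (Quotient.mk s) ∧ {t ∈ T | ∃ u ∈ S, s t u}.Subsingleton := by
  simp only [injOn_quotientMk_iff, mergeClasses_apply, Set.Subsingleton, Set.mem_sep_iff]
  grind

theorem injOn_quotientMk_and_injOn_mergeClasses_iff (hST : Disjoint S T) :
    S.InjOn (Quotient.mk s) ∧ T.InjOn (Quotient.mk (mergeClasses s S)) ↔
      (S ∪ T).InjOn (Quotient.mk s) ∨
        ∃ r ∈ S, ∃ t ∈ T, s r t ∧ ∀ x ∈ S ∪ T, ∀ y ∈ S ∪ T, x ≠ y → s x y →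
          (x = r ∧ y = t) ∨ (x = t ∧ y = r) := by
  rw [injOn_quotientMk_mergeClasses_iff, Set.injOn_union hST, injOn_quotientMk_iff,
    injOn_quotientMk_iff]
  rw [Set.disjoint_left] at hST
  constructor
  · rintro ⟨injS, injT, subsingleton⟩
    by_cases hcross : ∃ r ∈ S, ∃ t ∈ T, s r t
    · obtain ⟨r, hr, t, ht, hrt⟩ := hcross
      have cross_unique : ∀ x ∈ S, ∀ y ∈ T, s x y → x = r ∧ y = t := by
        intro x hx y hy hxy
        obtain rfl : y = t := subsingleton ⟨hy, x, hx, s.symm' hxy⟩ ⟨ht, r, hr, s.symm' hrt⟩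
        exact ⟨injS x hx r hr (s.trans' hxy (s.symm' hrt)), rfl⟩
      refine Or.inr ⟨r, hr, t, ht, hrt, ?_⟩
      rintro x (hx | hx) y (hy | hy) hne hxy
      · exact absurd (injS x hx y hy hxy) hne
      · exact Or.inl (cross_unique x hx y hy hxy)
      · exact Or.inr (cross_unique y hy x hx (s.symm' hxy)).symm
      · exact absurd (injT x hx y hy hxy) hne
    · exact Or.inl ⟨injS, injT, fun x hx y hy e => hcross ⟨x, hx, y, hy, Quotient.exact e⟩⟩
  · rintro (⟨injS, injT, no_cross⟩ | ⟨r, hr, t, ht, -, unique⟩)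
    · exact ⟨injS, injT,
        fun y ⟨_, x, hx, hyx⟩ => absurd (Quotient.sound (s.symm' hyx)) (no_cross x hx y ‹_›)⟩
    · refine ⟨fun x hx y hy hxy => ?_, fun x hx y hy hxy => ?_, ?_⟩
      · by_contra hne
        rcases unique x (.inl hx) y (.inl hy) hne hxy with ⟨-, rfl⟩ | ⟨rfl, -⟩
        exacts [hST hy ht, hST hx ht]
      · by_contra hne
        rcases unique x (.inr hx) y (.inr hy) hne hxy with ⟨rfl, -⟩ | ⟨-, rfl⟩
        exacts [hST hr hx, hST hr hy]
      · have eq_t : ∀ y ∈ {y ∈ T | ∃ x ∈ S, s y x}, y = t := by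
          rintro y ⟨hy, x, hx, hyx⟩
          rcases unique y (.inr hy) x (.inl hx) (fun e => hST hx (e ▸ hy)) hyx with h | h
          exacts [absurd hy (h.1 ▸ hST hr), h.1]
        exact fun x hx y hy => (eq_t x hx).trans (eq_t y hy).symm

end Setoid

section Perm

variable {X : Type*} {s : Setoid X} {f : Perm X} {a b : X}

/-- The Young subgroup of an equivalence relation `s`: the permutations that map every class of `s`
to itself. -/
def youngSubgroup (s : Setoid X) : Subgroup (Perm X) where
  carrier := {f | ∀ x, s x (f x)}
  one_mem' := s.refl'
  mul_mem' hf hg x := s.trans' (hg x) (hf _)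
  inv_mem' {f} hf x := by simpa using s.symm' (hf (f⁻¹ x))

theorem sameCycle_setoid_le_iff : SameCycle.setoid f ≤ s ↔ f ∈ youngSubgroup s := by
  constructor
  · exact fun h x => h (sameCycle_apply_right.2 (SameCycle.refl f x))
  · rintro hf x _ ⟨i, rfl⟩
    exact zpow_mem hf i x

theorem sameCycle_setoid_one : SameCycle.setoid (1 : Perm X) = ⊥ :=
  Setoid.ext fun _ _ => sameCycle_one

theorem sameCycle_setoid_inv (f : Perm X) : SameCycle.setoid f⁻¹ = SameCycle.setoid f :=
  Setoid.ext fun _ _ => sameCycle_inv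

theorem sameCycle_setoid_mul_le_sup (f g : Perm X) :
    SameCycle.setoid (f * g) ≤ SameCycle.setoid f ⊔ SameCycle.setoid g :=
  sameCycle_setoid_le_iff.2 <|
    mul_mem (sameCycle_setoid_le_iff.1 le_sup_left) (sameCycle_setoid_le_iff.1 le_sup_right)

section Swap

variable [DecidableEq X]

theorem swap_mem_youngSubgroup (h : s a b) : swap a b ∈ youngSubgroup s := by
  intro x
  rw [swap_apply_def]
  split_ifs with hxa hxb
  exacts [hxa ▸ h, hxb ▸ s.symm' h, s.refl' x]

theorem sameCycle_setoid_swap_mul_le_mergeClasses (f : Perm X) (a b : X) :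
    SameCycle.setoid (swap a b * f) ≤ mergeClasses (SameCycle.setoid f) {a, b} :=
  sameCycle_setoid_le_iff.2 <| mul_mem
    (swap_mem_youngSubgroup (mergeClasses_of_mem _ (by simp) (by simp)))
    (sameCycle_setoid_le_iff.1 (le_mergeClasses _ _))

theorem sameCycle_setoid_le_mergeClasses_swap_mul (f : Perm X) (a b : X) :
    SameCycle.setoid f ≤ mergeClasses (SameCycle.setoid (swap a b * f)) {a, b} := by
  simpa using sameCycle_setoid_swap_mul_le_mergeClasses (swap a b * f) a b

theorem sameCycle_swap_mul [Finite X] (h : ¬ f.SameCycle a b) : (swap a b * f).SameCycle a b := by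
  -- Otherwise the inverse of `swap a b * f`, started at `b`, retraces the backward `f`-orbit of `a`
  -- without meeting `a` or `b`; but that orbit returns to `a`.
  by_contra hab
  have backward_orbit (i : ℕ) : (swap a b * f).SameCycle b ((f⁻¹ ^ i) (f⁻¹ a)) := by
    induction i with
    | zero => simpa using (sameCycle_apply_right (f := swap a b * f) (x := f⁻¹ a)).2 .rfl |>.symm
    | succ i ih =>
      set y := (f⁻¹ ^ i) (f⁻¹ a)
      have hya : y ≠ a := fun e => hab (e ▸ ih).symm
      have hyb : y ≠ b := by
        rintro rfl
        exact h (sameCycle_inv.1 ⟨i + 1, by rw [zpow_add_one, zpow_natCast, mul_apply]⟩)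
      have step : (swap a b * f) (f⁻¹ y) = y := by simp [swap_apply_of_ne_of_ne hya hyb]
      rw [pow_succ', mul_apply]
      exact ih.trans (step ▸ sameCycle_apply_left.2 .rfl)
  obtain ⟨i, hi⟩ := (sameCycle_apply_left.2 (SameCycle.refl f⁻¹ a)).exists_nat_pow_eq
  exact hab (hi ▸ backward_orbit i).symm

theorem sameCycle_setoid_swap_mul_eq_mergeClasses [Finite X] (h : ¬ f.SameCycle a b) :
    SameCycle.setoid (swap a b * f) = mergeClasses (SameCycle.setoid f) {a, b} := by
  have hab : SameCycle.setoid (swap a b * f) a b := sameCycle_swap_mul h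
  refine le_antisymm (sameCycle_setoid_swap_mul_le_mergeClasses f a b)
    (mergeClasses_pair_le_iff.2 ⟨?_, hab⟩)
  exact (sameCycle_setoid_le_mergeClasses_swap_mul f a b).trans
    (mergeClasses_pair_le_iff.2 ⟨le_rfl, hab⟩)

theorem numClasses_sup_swap_mul_le [Finite X] (s : Setoid X) (f : Perm X) (a b : X) :
    numClasses (s ⊔ SameCycle.setoid (swap a b * f)) ≤
      numClasses (s ⊔ SameCycle.setoid f) + 1 := by
  refine (numClasses_le_mergeClasses_pair_add_one _ a b).trans (Nat.add_le_add_right ?_ 1)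
  rw [← sup_mergeClasses]
  exact numClasses_le_of_le (sup_le_sup_left (sameCycle_setoid_le_mergeClasses_swap_mul f a b) s)

theorem swap_mul_induction [Finite X] {P : Perm X → Prop} (f : Perm X) (one : P 1)
    (swap_mul : ∀ (f : Perm X) (a b : X), ¬ f.SameCycle a b → P f → P (swap a b * f)) : P f := by
  have := Fintype.ofFinite X
  induction hk : f.support.card using Nat.strong_induction_on generalizing f with
  | _ k ih =>
    subst hk
    by_cases hf : f = 1
    · rwa [hf]
    obtain ⟨a, ha⟩ : ∃ a, f a ≠ a := by
      by_contra! h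
      exact hf (Equiv.ext h)
    have hfix : (swap a (f a) * f) a = a := by simp
    have hnot : ¬ (swap a (f a) * f).SameCycle a (f a) := fun h => ha (h.eq_of_left hfix).symm
    simpa using swap_mul _ a (f a) hnot (ih _ (card_support_swap_mul ha) _ rfl)

end Swap

theorem numClasses_sup_mul_add_le [Finite X] (s : Setoid X) (α β : Perm X) :
    numClasses (s ⊔ SameCycle.setoid (β * α)) + numClasses (SameCycle.setoid α) +
        numClasses (SameCycle.setoid β) ≤
      Nat.card X + numClasses (s ⊔ SameCycle.setoid α) +
        numClasses (SameCycle.setoid α ⊔ SameCycle.setoid β) := by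
  classical
  induction β using swap_mul_induction with
  | one =>
    rw [one_mul, sameCycle_setoid_one, sup_bot_eq, numClasses_bot]
    omega
  | swap_mul β a b hβ ih =>
    have hβ_count := numClasses_mergeClasses_pair_add_one (s := SameCycle.setoid β) hβ
    rw [sameCycle_setoid_swap_mul_eq_mergeClasses hβ, sup_mergeClasses, mul_assoc]
    by_cases hab : (SameCycle.setoid α ⊔ SameCycle.setoid β) a b
    · have hle := numClasses_sup_swap_mul_le s (β * α) a b
      have hαβ := numClasses_le_of_le (mergeClasses_pair_le_iff.2 ⟨le_rfl, hab⟩)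
      omega
    · have hβα : ¬ (β * α).SameCycle a b := fun h =>
        hab (sup_comm (SameCycle.setoid β) _ ▸ sameCycle_setoid_mul_le_sup β α h)
      have hαβ := numClasses_mergeClasses_pair_add_one hab
      have hle : numClasses (s ⊔ SameCycle.setoid (swap a b * (β * α))) ≤
          numClasses (s ⊔ SameCycle.setoid (β * α)) := by
        rw [sameCycle_setoid_swap_mul_eq_mergeClasses hβα]
        exact numClasses_le_of_le (sup_le_sup_left (le_mergeClasses _ _) s)
      omega

theorem numClasses_sup_add_le_of_mul_eq_mul [Finite X] {π κ σ ρ : Perm X} (h : π * κ = σ * ρ) :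
    numClasses (SameCycle.setoid π ⊔ SameCycle.setoid σ) + numClasses (SameCycle.setoid κ) +
        numClasses (SameCycle.setoid ρ) ≤
      Nat.card X + numClasses (SameCycle.setoid π ⊔ SameCycle.setoid κ) +
        numClasses (SameCycle.setoid κ ⊔ SameCycle.setoid ρ) := by
  have hquot : ρ * κ⁻¹ = σ⁻¹ * π := by
    rw [mul_inv_eq_iff_eq_mul, mul_assoc, h, inv_mul_cancel_left]
  have hle : SameCycle.setoid π ⊔ SameCycle.setoid (ρ * κ⁻¹) ≤
      SameCycle.setoid π ⊔ SameCycle.setoid σ := by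
    rw [hquot]
    refine sup_le le_sup_left ((sameCycle_setoid_mul_le_sup σ⁻¹ π).trans ?_)
    rw [sameCycle_setoid_inv, sup_comm]
  have hcount := numClasses_sup_mul_add_le (SameCycle.setoid π) κ⁻¹ ρ
  rw [sameCycle_setoid_inv] at hcount
  have := numClasses_le_of_le hle
  omega

theorem numClasses_sup_add_eq_of_mul_eq_mul [Finite X] {π κ σ ρ : Perm X} (h : π * κ = σ * ρ)
    (hplanar : 2 * Nat.card X + 2 * numClasses (SameCycle.setoid π ⊔ SameCycle.setoid κ) ≤
      numClasses (SameCycle.setoid π) + numClasses (SameCycle.setoid κ) +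
        numClasses (SameCycle.setoid σ) + numClasses (SameCycle.setoid ρ)) :
    numClasses (SameCycle.setoid π ⊔ SameCycle.setoid σ) + numClasses (SameCycle.setoid κ) +
        numClasses (SameCycle.setoid ρ) =
      Nat.card X + numClasses (SameCycle.setoid π ⊔ SameCycle.setoid κ) +
        numClasses (SameCycle.setoid κ ⊔ SameCycle.setoid ρ) := by
  have hle := numClasses_sup_add_le_of_mul_eq_mul h
  have h_inv : κ⁻¹ * π⁻¹ = ρ⁻¹ * σ⁻¹ := by rw [← mul_inv_rev, h, mul_inv_rev]
  have hge := numClasses_sup_add_le_of_mul_eq_mul h_inv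
  simp only [sameCycle_setoid_inv] at hge
  rw [sup_comm (SameCycle.setoid κ) (SameCycle.setoid π)] at hge
  omega

end Perm

section Annulus

theorem cycleCount_eq_numClasses {N : ℕ} (π : Perm (Fin N)) :
    cycleCount π = numClasses (SameCycle.setoid π) := by
  have classes_eq : {O : Set (Fin N) | ∃ x, O = {y | π.SameCycle x y}} =
      (SameCycle.setoid π).classes := by
    refine Set.ext fun O => exists_congr fun x => ?_
    have cycle_eq : {y | π.SameCycle x y} = {y | SameCycle.setoid π y x} :=
      Set.ext fun _ => sameCycle_comm
    rw [cycle_eq]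
  rw [cycleCount, classes_eq, numClasses, Nat.card_congr (Setoid.quotientEquivClasses _),
    Nat.card_coe_set_eq]

theorem jointTrans_iff_sup_eq_top {N : ℕ} {π σ : Perm (Fin N)} :
    JointTrans π σ ↔ SameCycle.setoid π ⊔ SameCycle.setoid σ = ⊤ := by
  set r := SameCycle.setoid π ⊔ SameCycle.setoid σ
  rw [Setoid.eq_top_iff]
  constructor
  · intro h x y
    obtain ⟨g, hg, rfl⟩ := h x y
    have closure_le : Subgroup.closure {π, σ} ≤ youngSubgroup r := by
      rw [Subgroup.closure_le]
      rintro f (rfl | rfl)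
      exacts [sameCycle_setoid_le_iff.1 le_sup_left,
        sameCycle_setoid_le_iff.1 le_sup_right]
    exact closure_le hg x
  · intro h x y
    have le_orbitRel {f : Perm (Fin N)} (hf : f ∈ Subgroup.closure {π, σ}) :
        SameCycle.setoid f ≤ MulAction.orbitRel (Subgroup.closure {π, σ}) (Fin N) :=
      sameCycle_setoid_le_iff.2 fun x => Setoid.symm' _ ⟨⟨f, hf⟩, rfl⟩
    have r_le : r ≤ MulAction.orbitRel (Subgroup.closure {π, σ}) (Fin N) :=
      sup_le (le_orbitRel (Subgroup.subset_closure (by simp)))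
        (le_orbitRel (Subgroup.subset_closure (by simp)))
    obtain ⟨⟨g, hg⟩, hgx⟩ := r_le (h y x)
    exact ⟨g, hg, hgx⟩

theorem annularGamma_val {p q : ℕ} (x : Fin (p + q)) :
    (annularGamma p q x).val =
      if x.val + 1 = p then 0 else if x.val + 1 = p + q then p else x.val + 1 := by
  have finRotate_val (k : ℕ) (i : Fin k) :
      (finRotate k i).val = if i.val + 1 = k then 0 else i.val + 1 := by
    obtain ⟨k, rfl⟩ := Nat.exists_eq_add_one.2 i.pos
    rw [coe_finRotate]
    simp [Fin.ext_iff]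
  obtain ⟨i | i, rfl⟩ := finSumFinEquiv.surjective x
  · rw [annularGamma, permCongr_apply, symm_apply_apply, Perm.sumCongr_apply, Sum.map_inl,
      finSumFinEquiv_apply_left, finSumFinEquiv_apply_left, Fin.val_castAdd, Fin.val_castAdd,
      finRotate_val]
    split_ifs <;> omega
  · rw [annularGamma, permCongr_apply, symm_apply_apply, Perm.sumCongr_apply, Sum.map_inr,
      finSumFinEquiv_apply_right, finSumFinEquiv_apply_right, Fin.val_natAdd, Fin.val_natAdd,
      finRotate_val]
    split_ifs <;> omega

theorem intervalInvolution_val {N : ℕ} (x : Fin N) :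
    (intervalInvolution N x).val = if x.val % 2 = 0 then min (x.val + 1) (N - 1) else x.val - 1 :=
  rfl

theorem intervalInvolution_inv (N : ℕ) : (intervalInvolution N)⁻¹ = intervalInvolution N :=
  Function.Involutive.toPerm_symm _

/-- The even numbers of the interval `{a + 1, …, b}`, each number `k` being represented by the
element `k - 1` of `Fin N`. -/
def evensBetween (N a b : ℕ) : Set (Fin N) := {x | (x.val + 1) % 2 = 0 ∧ a ≤ x.val ∧ x.val < b}

theorem mem_evensBetween {N a b : ℕ} {x : Fin N} :
    x ∈ evensBetween N a b ↔ (x.val + 1) % 2 = 0 ∧ a ≤ x.val ∧ x.val < b :=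
  Iff.rfl

theorem disjoint_evensBetween (N a b c : ℕ) :
    Disjoint (evensBetween N a b) (evensBetween N b c) :=
  Set.disjoint_left.2 fun _ h h' => h.2.2.not_ge h'.2.1

theorem evensBetween_union_evensBetween {N a b c : ℕ} (hab : a ≤ b) (hbc : b ≤ c) :
    evensBetween N a b ∪ evensBetween N b c = evensBetween N a c := by
  ext x
  simp only [Set.mem_union, mem_evensBetween]
  omega

theorem evensBetween_nonempty {N a b : ℕ} (hab : a + 2 ≤ b) (hb : b ≤ N) :
    (evensBetween N a b).Nonempty := by
  refine ⟨⟨a + 1 - a % 2, by omega⟩, ?_⟩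
  rw [mem_evensBetween]
  dsimp only
  omega

theorem rel_of_mem_evensBetween {N a b : ℕ} {r : Setoid (Fin N)}
    (h : ∀ x ∈ evensBetween N a b, ∀ y ∈ evensBetween N a b, y.val = x.val + 2 → r x y) :
    ∀ x ∈ evensBetween N a b, ∀ y ∈ evensBetween N a b, r x y := by
  intro x hx y hy
  wlog hxy : x.val ≤ y.val generalizing x y
  · exact r.symm' (this y hy x hx (by omega))
  obtain ⟨k, hk⟩ : ∃ k, y.val = x.val + 2 * k :=
    ⟨(y.val - x.val) / 2, by rw [mem_evensBetween] at hx hy; omega⟩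
  induction k generalizing y with
  | zero => exact Fin.ext hk ▸ r.refl' x
  | succ k ih =>
    let z : Fin N := ⟨x.val + 2 * k, by omega⟩
    have hz : z ∈ evensBetween N a b := by
      rw [mem_evensBetween] at hx hy ⊢
      dsimp only [z]
      omega
    exact r.trans' (ih z hz (Nat.le_add_right _ _) rfl) (h z hz y hy hk)

theorem injOn_quotientMk_intervalInvolution (N : ℕ) :
    (evensBetween N 0 N).InjOn (Quotient.mk (SameCycle.setoid (intervalInvolution N))) := by
  have le_ker : SameCycle.setoid (intervalInvolution N) ≤ Setoid.ker fun x => x.val / 2 := by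
    refine sameCycle_setoid_le_iff.2 fun x => ?_
    rw [Setoid.ker_def, intervalInvolution_val]
    split_ifs <;> omega
  refine injOn_quotientMk_iff.2 fun x hx y hy hxy => Fin.ext ?_
  have : x.val / 2 = y.val / 2 := le_ker hxy
  rw [mem_evensBetween] at hx hy
  omega

/-- The permutation `I⁻¹ γ`, complementary to the interval involution `I` in `γ`: it fixes the odd
numbers and rotates the even numbers of each of the two cycles of `γ`. -/
def evenRotation (n m : ℕ) : Perm (Fin (2 * n + 2 * m)) :=
  (intervalInvolution (2 * n + 2 * m))⁻¹ * annularGamma (2 * n) (2 * m)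

variable {n m : ℕ}

theorem evenRotation_val (x : Fin (2 * n + 2 * m)) :
    (evenRotation n m x).val =
      if x.val % 2 = 0 then x.val else if x.val + 1 = 2 * n then 1
        else if x.val + 1 = 2 * n + 2 * m then 2 * n + 1 else x.val + 2 := by
  rw [evenRotation, intervalInvolution_inv, mul_apply, intervalInvolution_val, annularGamma_val]
  split_ifs <;> omega

theorem sameCycle_setoid_evenRotation (n m : ℕ) :
    SameCycle.setoid (evenRotation n m) =
      mergeClasses (mergeClasses ⊥ (evensBetween _ 0 (2 * n)))
        (evensBetween _ (2 * n) (2 * n + 2 * m)) := by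
  apply le_antisymm
  · refine sameCycle_setoid_le_iff.2 fun x => ?_
    have hx := evenRotation_val x
    by_cases hodd : x.val % 2 = 0
    · rw [if_pos hodd] at hx
      rw [Fin.ext hx]
    by_cases hlt : x.val < 2 * n
    · refine le_mergeClasses _ _ (mergeClasses_of_mem ⊥ ?_ ?_) <;>
        rw [mem_evensBetween] <;> split_ifs at hx <;> omega
    · refine mergeClasses_of_mem _ ?_ ?_ <;>
        rw [mem_evensBetween] <;> split_ifs at hx <;> omega
  · have rel_add_two (x y : Fin (2 * n + 2 * m)) (hodd : (x.val + 1) % 2 = 0)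
        (hn : x.val + 1 ≠ 2 * n) (hxy : y.val = x.val + 2) :
        SameCycle.setoid (evenRotation n m) x y := by
      have := y.isLt
      have hy : evenRotation n m x = y := by
        rw [Fin.ext_iff, evenRotation_val]
        split_ifs <;> omega
      exact hy ▸ sameCycle_apply_right.2 .rfl
    refine mergeClasses_le_iff.2 ⟨mergeClasses_le_iff.2 ⟨bot_le, ?_⟩, ?_⟩
    all_goals
      refine rel_of_mem_evensBetween fun x hx y hy hxy => rel_add_two x y hx.1 ?_ hxy
      rw [mem_evensBetween] at hx hy
      omega

theorem sup_sameCycle_setoid_evenRotation (s : Setoid (Fin (2 * n + 2 * m))) :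
    s ⊔ SameCycle.setoid (evenRotation n m) =
      mergeClasses (mergeClasses s (evensBetween _ 0 (2 * n)))
        (evensBetween _ (2 * n) (2 * n + 2 * m)) := by
  rw [sameCycle_setoid_evenRotation, sup_mergeClasses, sup_mergeClasses, sup_bot_eq]

theorem ncard_evens_le_numClasses_intervalInvolution (n m : ℕ) :
    (evensBetween (2 * n + 2 * m) 0 (2 * n)).ncard +
        (evensBetween (2 * n + 2 * m) (2 * n) (2 * n + 2 * m)).ncard ≤
      numClasses (SameCycle.setoid (intervalInvolution (2 * n + 2 * m))) := by
  rw [← Set.ncard_union_eq (disjoint_evensBetween _ _ _ _),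
    evensBetween_union_evensBetween (Nat.zero_le _) (Nat.le_add_right _ _)]
  exact ncard_le_numClasses (injOn_quotientMk_intervalInvolution _)

theorem numClasses_evenRotation_add (hn : 1 ≤ n) (hm : 1 ≤ m) :
    numClasses (SameCycle.setoid (evenRotation n m)) +
        (evensBetween (2 * n + 2 * m) 0 (2 * n)).ncard +
        (evensBetween (2 * n + 2 * m) (2 * n) (2 * n + 2 * m)).ncard = 2 * n + 2 * m + 2 := by
  have injOn_bot (S : Set (Fin (2 * n + 2 * m))) : S.InjOn (Quotient.mk ⊥) :=
    injOn_quotientMk_iff.2 fun _ _ _ _ => id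
  have hcount := (numClasses_mergeClasses_mergeClasses_add_iff ⊥
    (evensBetween_nonempty (by omega) (by omega)) (evensBetween_nonempty (by omega) le_rfl)).2
    ((injOn_quotientMk_and_injOn_mergeClasses_iff (disjoint_evensBetween _ 0 (2 * n) _)).2
      (Or.inl (injOn_bot _)))
  rwa [numClasses_bot, Nat.card_fin, ← sameCycle_setoid_evenRotation] at hcount

theorem jointTrans_intervalInvolution_iff (hn : 1 ≤ n) (hm : 1 ≤ m)
    {π : Perm (Fin (2 * n + 2 * m))} (hπ : AnnularNC (2 * n) (2 * m) π) :
    JointTrans π (intervalInvolution (2 * n + 2 * m)) ↔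
      (evensBetween _ 0 (2 * n)).InjOn
          (Quotient.mk (SameCycle.setoid (π⁻¹ * annularGamma (2 * n) (2 * m)))) ∧
        (evensBetween _ (2 * n) (2 * n + 2 * m)).InjOn
          (Quotient.mk (mergeClasses (SameCycle.setoid (π⁻¹ * annularGamma (2 * n) (2 * m)))
            (evensBetween _ 0 (2 * n)))) := by
  have : Nonempty (Fin (2 * n + 2 * m)) := ⟨⟨0, by omega⟩⟩
  obtain ⟨htrans, hcount⟩ := hπ
  set κ := π⁻¹ * annularGamma (2 * n) (2 * m)
  rw [jointTrans_iff_sup_eq_top] at htrans ⊢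
  rw [cycleCount_eq_numClasses, cycleCount_eq_numClasses] at hcount
  have hκ : π * κ = intervalInvolution (2 * n + 2 * m) * evenRotation n m := by
    rw [mul_inv_cancel_left, evenRotation, mul_inv_cancel_left]
  have hπκ : numClasses (SameCycle.setoid π ⊔ SameCycle.setoid κ) = 1 := by
    rw [numClasses_eq_one_iff, ← top_le_iff, ← htrans, ← mul_inv_cancel_left π (annularGamma _ _)]
    exact sup_le le_sup_left (sameCycle_setoid_mul_le_sup _ _)
  have hI := ncard_evens_le_numClasses_intervalInvolution n m
  have hρ := numClasses_evenRotation_add hn hm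
  have hcard := Nat.card_fin (2 * n + 2 * m)
  have horbits := numClasses_sup_add_eq_of_mul_eq_mul hκ (by omega)
  rw [sup_sameCycle_setoid_evenRotation] at horbits
  rw [← numClasses_eq_one_iff, ← numClasses_mergeClasses_mergeClasses_add_iff _
    (evensBetween_nonempty (by omega) (by omega)) (evensBetween_nonempty (by omega) le_rfl)]
  omega

end Annulus

theorem stmt_4 (n m : ℕ) (hn : 1 ≤ n) (hm : 1 ≤ m)
    (π : Equiv.Perm (Fin (2 * n + 2 * m)))
    (hπ : AnnularNC (2 * n) (2 * m) π) :
    JointTrans π (intervalInvolution (2 * n + 2 * m)) ↔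
      (SeparatesEven (π⁻¹ * annularGamma (2 * n) (2 * m)) ∨
        ∃ r s : Fin (2 * n + 2 * m),
          (r.val + 1) % 2 = 0 ∧ (s.val + 1) % 2 = 0 ∧
          r.val < 2 * n ∧ 2 * n ≤ s.val ∧
          (π⁻¹ * annularGamma (2 * n) (2 * m)).SameCycle r s ∧
          ∀ x y : Fin (2 * n + 2 * m), x ≠ y →
            (x.val + 1) % 2 = 0 → (y.val + 1) % 2 = 0 →
            (π⁻¹ * annularGamma (2 * n) (2 * m)).SameCycle x y →
            (x = r ∧ y = s) ∨ (x = s ∧ y = r)) := by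
  rw [jointTrans_intervalInvolution_iff hn hm hπ,
    injOn_quotientMk_and_injOn_mergeClasses_iff (disjoint_evensBetween _ _ _ _),
    evensBetween_union_evensBetween (Nat.zero_le _) (Nat.le_add_right _ _)]
  have mem_all (x : Fin (2 * n + 2 * m)) :
      x ∈ evensBetween _ 0 (2 * n + 2 * m) ↔ (x.val + 1) % 2 = 0 := by
    simp [mem_evensBetween]
  refine or_congr ?_ ?_
  · simp only [injOn_quotientMk_iff, mem_all, SeparatesEven]
    exact ⟨fun h x y hxy hx hy => h x hx y hy hxy, fun h x hx y hy hxy => h x y hxy hx hy⟩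
  · simp only [mem_all, mem_evensBetween]
    constructor
    · rintro ⟨r, ⟨hr, -, hrn⟩, s, ⟨hs, hns, -⟩, hrs, unique⟩
      exact ⟨r, s, hr, hs, hrn, hns, hrs, fun x y hne hx hy => unique x hx y hy hne⟩
    · rintro ⟨r, s, hr, hs, hrn, hns, hrs, unique⟩
      exact ⟨r, ⟨hr, r.val.zero_le, hrn⟩, s, ⟨hs, hns, s.isLt⟩, hrs,
        fun x hx y hy hne => unique x y hne hx hy⟩
end

section
/- Let n, m ≥ 1, set N = 2n+2m and γ = γ_{2n,2m}. Let σ ∈ S_NC(2n,2m) be such that σ separates even numbers and σ has exactly one cycle C intersecting both {1,…,2n} and {2n+1,…,N} (a unique through cycle); assume all elements of C are odd, and set l = |C ∩ {1,…,2n}| and s = |C ∩ {2n+1,…,N}|. Then the graph G_{γσ⁻¹} is bipartite if and only if (1) every cycle of σ consisting entirely of odd numbers has even cardinality, and (2) l and s are both even. -/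
/-!
A bipartition of `G_π` for `π = γσ⁻¹` is a `π`-invariant function `f` with values in `ZMod 2` whose
coboundary `w = f ∘ γ - f` equals `1` at odd numbers. Invariance says `f ∘ γ = f ∘ σ`, so `w` is
also `f ∘ σ - f` and sums to zero over every cycle of `σ` and of `γ`. The annular non-crossing
condition is Euler's formula for the sphere, and a dimension count turns it into the converse: every
`w` with these zero sums is the coboundary of an invariant `f`.

It remains to prescribe `w = 1` at odd numbers. As no cycle of `σ` contains two even numbers, the
even entry of a cycle, when there is one, can absorb its sum, so the sums over the cycles of `σ` can
be made zero exactly when the cycles of odd numbers have even length. Given this, only the through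
cycle contributes to the sums over the two circles, which are `l` and `s` modulo `2`.
-/

open Equiv Module

section Invariants

variable {α β : Type*}

theorem comp_eq_of_mem_closure {S : Set (Perm α)} {f : α → β} (hf : ∀ π ∈ S, f ∘ π = f)
    {π : Perm α} (hπ : π ∈ Subgroup.closure S) : f ∘ π = f := by
  induction hπ using Subgroup.closure_induction with
  | mem π hπ => exact hf π hπ
  | one => rfl
  | mul π ρ _ _ hπ hρ => rw [Perm.coe_mul, ← Function.comp_assoc, hπ, hρ]
  | inv π _ hπ => exact (Equiv.comp_symm_eq π f f).2 hπ.symm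

theorem eq_of_sameCycle {π : Perm α} {f : α → β} (hf : f ∘ π = f) {x y : α}
    (h : π.SameCycle x y) : f x = f y := by
  obtain ⟨i, rfl⟩ := h
  have hi : π ^ i ∈ Subgroup.closure {π} :=
    Subgroup.zpow_mem _ (Subgroup.mem_closure_of_mem (Set.mem_singleton π)) i
  have hfi : f ∘ (π ^ i : Perm α) = f :=
    comp_eq_of_mem_closure (fun _ h => Set.mem_singleton_iff.1 h ▸ hf) hi
  exact (congrFun hfi x).symm

variable (R : Type*) [Ring R]

/-- The coboundary of a function along the edges `x → π x` of the cycle graph of `π`. -/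
def coboundary (π : Perm α) : (α → R) →ₗ[R] (α → R) :=
  LinearMap.funLeft R R π - LinearMap.id

/-- The functions which are constant on the cycles of `π`. -/
def invariantFunctions (π : Perm α) : Submodule R (α → R) :=
  LinearMap.ker (coboundary R π)

variable {R}

theorem mem_invariantFunctions {π : Perm α} {f : α → R} :
    f ∈ invariantFunctions R π ↔ f ∘ π = f :=
  LinearMap.mem_ker.trans sub_eq_zero

theorem mem_invariantFunctions_mul_inv {σ γ : Perm α} {f : α → R} :
    f ∈ invariantFunctions R (γ * σ⁻¹) ↔ f ∘ γ = f ∘ σ := by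
  rw [mem_invariantFunctions, Perm.coe_mul, ← Function.comp_assoc]
  exact Equiv.comp_symm_eq σ _ _

theorem invariantFunctions_eq_range (π : Perm α) :
    invariantFunctions R π =
      LinearMap.range (LinearMap.funLeft R R (Quotient.mk (Perm.SameCycle.setoid π))) := by
  ext f
  rw [mem_invariantFunctions, LinearMap.mem_range]
  constructor
  · exact fun hf => ⟨Quotient.lift f fun _ _ => eq_of_sameCycle hf, rfl⟩
  · rintro ⟨g, rfl⟩
    exact funext fun x => congrArg g (Quotient.sound (Perm.SameCycle.refl π x).apply_left)

end Invariants

section CycleSums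

variable {α R : Type*} [Fintype α] [DecidableEq α] [Ring R]

variable (R) in
/-- The functions whose sum over every cycle of `π` vanishes. -/
def cycleSumZero (π : Perm α) : Submodule R (α → R) where
  carrier := {w | ∀ x, ∑ y with π.SameCycle x y, w y = 0}
  add_mem' hv hw x := by simp [Finset.sum_add_distrib, hv x, hw x]
  zero_mem' x := by simp
  smul_mem' c w hw x := by simp [← Finset.mul_sum, hw x]

theorem coboundary_mem_cycleSumZero (π : Perm α) (f : α → R) :
    coboundary R π f ∈ cycleSumZero R π := by
  intro x
  change ∑ y with π.SameCycle x y, (f (π y) - f y) = 0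
  rw [Finset.sum_sub_distrib, sub_eq_zero]
  exact Finset.sum_equiv π (by simp [Perm.sameCycle_apply_right]) fun _ _ => rfl

theorem mem_cycleSumZero_iff_dotProduct {π : Perm α} {w : α → R} :
    w ∈ cycleSumZero R π ↔ ∀ g ∈ invariantFunctions R π, g ⬝ᵥ w = 0 := by
  constructor
  · intro hw g hg
    have hcycle : ∀ x, ∑ y with π.SameCycle y x, g y * w y = 0 := by
      intro x
      rw [← mul_zero (g x), ← hw x, Finset.mul_sum]
      refine Finset.sum_congr (Finset.filter_congr fun y _ => Perm.sameCycle_comm) fun y hy => ?_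
      rw [eq_of_sameCycle (mem_invariantFunctions.1 hg) (Finset.mem_filter.1 hy).2]
    let : DecidableRel (Perm.SameCycle.setoid π) := inferInstanceAs (DecidableRel π.SameCycle)
    exact Finset.sum_cancels_of_partition_cancels (Perm.SameCycle.setoid π) fun x _ => hcycle x
  · intro hw x
    have hg : (fun y => if π.SameCycle x y then (1 : R) else 0) ∈ invariantFunctions R π :=
      mem_invariantFunctions.2 (funext fun y => by simp [Perm.sameCycle_apply_right])
    simpa [dotProduct, Finset.sum_filter] using hw _ hg

theorem sum_eq_zero_of_mem_cycleSumZero {π : Perm α} {w : α → R} (hw : w ∈ cycleSumZero R π)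
    {S : Finset α} (hS : ∀ x, π x ∈ S ↔ x ∈ S) : ∑ x ∈ S, w x = 0 := by
  have hg : (fun x => if x ∈ S then (1 : R) else 0) ∈ invariantFunctions R π :=
    mem_invariantFunctions.2 (funext fun x => by simp [hS])
  simpa [dotProduct] using mem_cycleSumZero_iff_dotProduct.1 hw _ hg

theorem sum_eq_sum_sameCycle_of_mem_cycleSumZero {π : Perm α} {w : α → R}
    (hw : w ∈ cycleSumZero R π) {S : Finset α} {x₀ : α}
    (hS : ∀ x, ¬ π.SameCycle x₀ x → (π x ∈ S ↔ x ∈ S)) :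
    ∑ x ∈ S, w x = ∑ x ∈ S with π.SameCycle x₀ x, w x := by
  rw [← Finset.sum_filter_add_sum_filter_not S (π.SameCycle x₀), add_eq_left]
  refine sum_eq_zero_of_mem_cycleSumZero hw fun x => ?_
  simp only [Finset.mem_filter, Perm.sameCycle_apply_right]
  exact and_congr_left (hS x)

theorem exists_mem_cycleSumZero_eqOn_iff {π : Perm α} {v : α → R} {S : Set α}
    (hS : ∀ x ∉ S, ∀ y ∉ S, π.SameCycle x y → x = y) :
    (∃ w ∈ cycleSumZero R π, Set.EqOn w v S) ↔
      ∀ x, (∀ y, π.SameCycle x y → y ∈ S) → ∑ y with π.SameCycle x y, v y = 0 := by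
  constructor
  · rintro ⟨w, hw, hwv⟩ x hx
    rw [← hw x]
    exact Finset.sum_congr rfl fun y hy => (hwv (hx y (by simpa using hy))).symm
  · intro hv
    classical
    let w : α → R := S.piecewise v fun e => -∑ y ∈ ({y | π.SameCycle e y} : Finset α).erase e, v y
    have hwv : Set.EqOn w v S := S.piecewise_eqOn _ _
    refine ⟨w, fun x => ?_, hwv⟩
    by_cases hx : ∀ y, π.SameCycle x y → y ∈ S
    · rw [← hv x hx]
      exact Finset.sum_congr rfl fun y hy => hwv (hx y (by simpa using hy))
    · push Not at hx
      obtain ⟨e, hxe, he⟩ := hx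
      have hcycle : ({y | π.SameCycle x y} : Finset α) = ({y | π.SameCycle e y} : Finset α) :=
        Finset.filter_congr fun y _ => ⟨hxe.symm.trans, hxe.trans⟩
      have hrest : ∀ y ∈ ({y | π.SameCycle e y} : Finset α).erase e, w y = v y := by
        intro y hy
        obtain ⟨hne, hey⟩ : y ≠ e ∧ π.SameCycle e y := by simpa using hy
        exact hwv (by_contra fun hyS => hne (hS e he y hyS hey).symm)
      have hwe : w e = -∑ y ∈ ({y | π.SameCycle e y} : Finset α).erase e, v y :=
        S.piecewise_eq_of_notMem _ _ he
      rw [hcycle, ← Finset.add_sum_erase _ w (a := e) (by simp [Perm.SameCycle.rfl]),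
        Finset.sum_congr rfl hrest, hwe, neg_add_cancel]

end CycleSums

section Planar

variable {α : Type*} (K : Type*) [Field K]

theorem finrank_invariantFunctions [Finite α] (π : Perm α) :
    finrank K (invariantFunctions K π) = Nat.card (Quotient (Perm.SameCycle.setoid π)) := by
  have : Fintype (Quotient (Perm.SameCycle.setoid π)) := Fintype.ofFinite _
  rw [invariantFunctions_eq_range, LinearMap.finrank_range_of_inj
    (LinearMap.funLeft_injective_of_surjective K K _ Quotient.mk_surjective), finrank_pi,
    Nat.card_eq_fintype_card]

theorem finrank_invariantFunctions_mul_comm (σ τ : Perm α) :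
    finrank K (invariantFunctions K (σ * τ)) = finrank K (invariantFunctions K (τ * σ)) := by
  have hmap : (invariantFunctions K (τ * σ)).map (LinearEquiv.funCongrLeft K K τ).toLinearMap =
    invariantFunctions K (σ * τ) := by
    ext f
    have hconj : ((f ∘ τ.symm) ∘ (τ * σ : Perm α)) ∘ τ = f ∘ (σ * τ : Perm α) :=
      funext fun x => congrArg f (τ.symm_apply_apply _)
    rw [Submodule.mem_map_equiv, mem_invariantFunctions, mem_invariantFunctions, ← hconj]
    exact Equiv.eq_comp_symm τ _ _
  rw [← hmap, LinearEquiv.finrank_map_eq]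

theorem finrank_invariantFunctions_inf_eq_one {σ γ : Perm α} [Nonempty α]
    (h : ∀ x y, ∃ π ∈ Subgroup.closure ({σ, γ} : Set (Perm α)), π x = y) :
    finrank K (invariantFunctions K σ ⊓ invariantFunctions K γ : Submodule K (α → K)) = 1 := by
  have hspan : invariantFunctions K σ ⊓ invariantFunctions K γ = K ∙ (1 : α → K) := by
    ext f
    rw [Submodule.mem_inf, mem_invariantFunctions, mem_invariantFunctions,
      Submodule.mem_span_singleton]
    constructor
    · rintro ⟨hσ, hγ⟩
      obtain ⟨x⟩ := ‹Nonempty α›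
      refine ⟨f x, funext fun y => ?_⟩
      obtain ⟨π, hπ, rfl⟩ := h x y
      have hfπ : f ∘ π = f := comp_eq_of_mem_closure (by simp [hσ, hγ]) hπ
      simpa using (congrFun hfπ x).symm
    · rintro ⟨c, rfl⟩
      exact ⟨rfl, rfl⟩
  rw [hspan, finrank_span_singleton one_ne_zero]

variable [Fintype α] [DecidableEq α]

theorem cycleSumZero_eq_dualCoannihilator (π : Perm α) :
    cycleSumZero K π =
      ((invariantFunctions K π).map (dotProductEquiv K α).toLinearMap).dualCoannihilator := by
  ext w
  simp only [mem_cycleSumZero_iff_dotProduct, Submodule.mem_dualCoannihilator, Submodule.mem_map,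
    forall_exists_index, and_imp, forall_apply_eq_imp_iff₂]
  rfl

theorem finrank_cycleSumZero_inf (σ γ : Perm α) :
    finrank K (invariantFunctions K σ ⊔ invariantFunctions K γ : Submodule K (α → K)) +
      finrank K (cycleSumZero K σ ⊓ cycleSumZero K γ : Submodule K (α → K)) =
      Fintype.card α := by
  rw [cycleSumZero_eq_dualCoannihilator, cycleSumZero_eq_dualCoannihilator,
    ← Submodule.dualCoannihilator_sup_eq, ← Submodule.map_sup,
    ← LinearEquiv.finrank_map_eq (dotProductEquiv K α),
    Subspace.finrank_add_finrank_dualCoannihilator_eq, finrank_fintype_fun_eq_card]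

theorem finrank_map_add_finrank_inf_ker {V W : Type*} [AddCommGroup V] [Module K V]
    [FiniteDimensional K V] [AddCommGroup W] [Module K W] (f : V →ₗ[K] W) (p : Submodule K V) :
    finrank K (p.map f) + finrank K (p ⊓ LinearMap.ker f : Submodule K V) = finrank K p := by
  rw [← LinearMap.finrank_range_add_finrank_ker (f ∘ₗ p.subtype), LinearMap.range_comp,
    Submodule.range_subtype, LinearMap.ker_comp, ← Submodule.map_comap_subtype,
    Submodule.finrank_map_subtype_eq]

/-- `heuler` says that every component of the hypermap with darts `α` and vertices, edges and faces
the cycles of `σ`, `γ` and `γ * σ⁻¹` has genus zero; the conclusion is that `H¹` then vanishes. -/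
theorem map_coboundary_invariantFunctions_of_finrank_eq {σ γ : Perm α}
    (heuler : finrank K (invariantFunctions K σ) + finrank K (invariantFunctions K γ) +
      finrank K (invariantFunctions K (γ * σ⁻¹)) = Fintype.card α +
        2 * finrank K (invariantFunctions K σ ⊓ invariantFunctions K γ : Submodule K (α → K))) :
    (invariantFunctions K (γ * σ⁻¹)).map (coboundary K γ) =
      cycleSumZero K σ ⊓ cycleSumZero K γ := by
  have hle : (invariantFunctions K (γ * σ⁻¹)).map (coboundary K γ) ≤
      cycleSumZero K σ ⊓ cycleSumZero K γ := by
    rintro _ ⟨f, hf, rfl⟩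
    have hσγ : coboundary K γ f = coboundary K σ f :=
      congrArg (· - f) (mem_invariantFunctions_mul_inv.1 hf)
    exact ⟨hσγ ▸ coboundary_mem_cycleSumZero σ f, coboundary_mem_cycleSumZero γ f⟩
  have hker : invariantFunctions K (γ * σ⁻¹) ⊓ LinearMap.ker (coboundary K γ) =
      invariantFunctions K σ ⊓ invariantFunctions K γ := by
    ext f
    change f ∈ invariantFunctions K (γ * σ⁻¹) ∧ f ∈ invariantFunctions K γ ↔
      f ∈ invariantFunctions K σ ∧ f ∈ invariantFunctions K γ
    rw [mem_invariantFunctions_mul_inv, mem_invariantFunctions, mem_invariantFunctions]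
    exact and_congr_left fun hγ => by rw [hγ, eq_comm]
  have hrank := finrank_map_add_finrank_inf_ker K (coboundary K γ) (invariantFunctions K (γ * σ⁻¹))
  have hsup := Submodule.finrank_sup_add_finrank_inf_eq (invariantFunctions K σ)
    (invariantFunctions K γ)
  have horth := finrank_cycleSumZero_inf K σ γ
  rw [hker] at hrank
  exact Submodule.eq_of_le_of_finrank_eq hle (by lia)

end Planar

section Annulus

theorem cycleCount_eq_card_quotient {N : ℕ} (π : Perm (Fin N)) :
    cycleCount π = Nat.card (Quotient (Perm.SameCycle.setoid π)) := by
  have hclasses : {O : Set (Fin N) | ∃ x, O = {y | π.SameCycle x y}} =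
      (Perm.SameCycle.setoid π).classes := by
    have hcycle (x : Fin N) : {y | π.SameCycle x y} = {y | π.SameCycle y x} :=
      Set.ext fun _ => Perm.sameCycle_comm
    simp only [hcycle]
    rfl
  rw [cycleCount, hclasses, ← Nat.card_coe_set_eq,
    Nat.card_congr (Setoid.quotientEquivClasses _).symm]

theorem finrank_invariantFunctions_eq_cycleCount (K : Type*) [Field K] {N : ℕ} (π : Perm (Fin N)) :
    finrank K (invariantFunctions K π) = cycleCount π := by
  rw [finrank_invariantFunctions, cycleCount_eq_card_quotient]

variable {p q : ℕ}

theorem annularGamma_castAdd (x : Fin p) :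
    annularGamma p q (Fin.castAdd q x) = Fin.castAdd q (finRotate p x) := by
  simp [annularGamma, Equiv.permCongr_apply]

theorem annularGamma_natAdd (x : Fin q) :
    annularGamma p q (Fin.natAdd p x) = Fin.natAdd p (finRotate q x) := by
  simp [annularGamma, Equiv.permCongr_apply]

theorem annularGamma_lt_iff (x : Fin (p + q)) : (annularGamma p q x).val < p ↔ x.val < p := by
  induction x using Fin.addCases with
  | left x => simp [annularGamma_castAdd]
  | right x => simp [annularGamma_natAdd]

theorem val_finRotate_of_succ_lt {k : ℕ} {x : Fin k} (hx : x.val + 1 < k) :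
    (finRotate k x).val = x.val + 1 := by
  obtain _ | k := k
  · exact x.elim0
  · exact coe_finRotate_of_ne_last (Fin.ne_of_lt (Nat.lt_of_succ_lt_succ hx))

theorem val_annularGamma {x : Fin (p + q)} (hp : x.val + 1 ≠ p) (hpq : x.val + 1 ≠ p + q) :
    (annularGamma p q x).val = x.val + 1 := by
  induction x using Fin.addCases with
  | left x =>
    rw [annularGamma_castAdd]
    exact val_finRotate_of_succ_lt (lt_of_le_of_ne x.2 hp)
  | right x =>
    rw [Fin.val_natAdd] at hpq
    rw [annularGamma_natAdd, Fin.val_natAdd, Fin.val_natAdd, val_finRotate_of_succ_lt (by lia),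
      Nat.add_assoc]

theorem sameCycle_annularGamma {x y : Fin (p + q)} :
    (annularGamma p q).SameCycle x y ↔ (x.val < p ↔ y.val < p) := by
  constructor
  · exact fun h => iff_of_eq (eq_of_sameCycle
      (f := fun x : Fin (p + q) => x.val < p) (funext fun x => propext (annularGamma_lt_iff x)) h)
  · intro h
    wlog hxy : x.val ≤ y.val generalizing x y
    · exact (this h.symm (Nat.le_of_not_le hxy)).symm
    suffices hk : ∀ k (hk : k < p + q), x.val ≤ k → (x.val < p ↔ k < p) →
        (annularGamma p q).SameCycle x ⟨k, hk⟩ from hk y y.2 hxy h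
    intro k hk hxk hside
    induction k, hxk using Nat.le_induction with
    | base => exact .refl _ x
    | succ k hxk ih =>
      have hstep : annularGamma p q ⟨k, by lia⟩ = ⟨k + 1, hk⟩ :=
        Fin.ext (val_annularGamma (by dsimp only; lia) (by dsimp only; lia))
      rw [← hstep, Perm.sameCycle_apply_right]
      exact ih (by lia) (by lia)

theorem cycleCount_annularGamma (hp : 1 ≤ p) (hq : 1 ≤ q) : cycleCount (annularGamma p q) = 2 := by
  let inFirst : Fin (p + q) → Bool := fun x => x.val < p
  have hsurj : Function.Surjective inFirst := by
    rintro (_ | _)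
    · exact ⟨⟨p, by lia⟩, by simp [inFirst]⟩
    · exact ⟨⟨0, by lia⟩, decide_eq_true hp⟩
  have hker : Perm.SameCycle.setoid (annularGamma p q) = Setoid.ker inFirst := by
    ext x y
    exact sameCycle_annularGamma.trans decide_eq_decide.symm
  rw [cycleCount_eq_card_quotient, hker,
    Nat.card_congr (Setoid.quotientKerEquivOfSurjective _ hsurj), Nat.card_eq_fintype_card,
    Fintype.card_bool]

theorem mem_cycleSumZero_annularGamma {R : Type*} [Ring R] {w : Fin (p + q) → R} :
    w ∈ cycleSumZero R (annularGamma p q) ↔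
      ∑ y with y.val < p, w y = 0 ∧ ∑ y with p ≤ y.val, w y = 0 := by
  constructor
  · intro hw
    constructor <;> refine sum_eq_zero_of_mem_cycleSumZero hw fun x => ?_
    · simpa using annularGamma_lt_iff x
    · simpa using (annularGamma_lt_iff x).not
  · rintro ⟨hfirst, hsecond⟩ x
    by_cases hx : x.val < p
    · simpa only [sameCycle_annularGamma, hx, true_iff] using hfirst
    · simpa only [sameCycle_annularGamma, hx, false_iff, not_lt] using hsecond

theorem AnnularNC.map_coboundary_invariantFunctions (K : Type*) [Field K] {σ : Perm (Fin (p + q))}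
    (hσ : AnnularNC p q σ) (hp : 1 ≤ p) (hq : 1 ≤ q) :
    (invariantFunctions K (annularGamma p q * σ⁻¹)).map (coboundary K (annularGamma p q)) =
      cycleSumZero K σ ⊓ cycleSumZero K (annularGamma p q) := by
  have : Nonempty (Fin (p + q)) := ⟨⟨0, by lia⟩⟩
  apply map_coboundary_invariantFunctions_of_finrank_eq
  rw [finrank_invariantFunctions_mul_comm, finrank_invariantFunctions_inf_eq_one K hσ.1,
    finrank_invariantFunctions_eq_cycleCount, finrank_invariantFunctions_eq_cycleCount,
    finrank_invariantFunctions_eq_cycleCount, cycleCount_annularGamma hp hq, Fintype.card_fin]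
  have := hσ.2
  lia

end Annulus

section Bipartite

theorem indicator_one_mem_invariantFunctions {α R : Type*} [Ring R] [Nontrivial R] {π : Perm α}
    {A : Set α} : A.indicator 1 ∈ invariantFunctions R π ↔ π '' A = A := by
  have hcomp : A.indicator (1 : α → R) ∘ π = (π ⁻¹' A).indicator 1 :=
    funext fun _ => (Set.indicator_comp_right π).symm
  have hinj : (π ⁻¹' A).indicator (1 : α → R) = A.indicator 1 ↔ π ⁻¹' A = A :=
    ⟨Set.indicator_one_inj R, fun h => by rw [h]⟩
  rw [mem_invariantFunctions, hcomp, hinj]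
  exact eq_comm.trans (Equiv.eq_preimage_iff_image_eq π A A)

theorem graphBipartite_iff_exists_invariantFunctions {N : ℕ} {π : Perm (Fin N)} :
    GraphBipartite π ↔ ∃ f ∈ invariantFunctions (ZMod 2) π, ∀ i (h : 2 * i + 1 < N),
      f ⟨2 * i + 1, h⟩ - f ⟨2 * i, Nat.lt_of_succ_lt h⟩ = 1 := by
  have hxor : ∀ a b : ZMod 2, Xor (a = 1) (b = 1) ↔ b - a = 1 := by decide
  constructor
  · rintro ⟨A, hA, hxorA⟩
    refine ⟨A.indicator 1, indicator_one_mem_invariantFunctions.2 hA, fun i h => (hxor _ _).1 ?_⟩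
    simp only [Set.indicator_eq_one_iff_mem]
    exact hxorA i h
  · rintro ⟨f, hf, hstep⟩
    have hA : π ⁻¹' {x | f x = 1} = {x | f x = 1} :=
      congrArg (fun g : Fin N → ZMod 2 => {x | g x = 1}) (mem_invariantFunctions.1 hf)
    exact ⟨{x | f x = 1}, (Equiv.eq_preimage_iff_image_eq π _ _).1 hA.symm,
      fun i h => (hxor _ _).2 (hstep i h)⟩

variable {n m : ℕ}

theorem forall_coboundary_annularGamma_iff {R : Type*} [Ring R]
    {f : Fin (2 * n + 2 * m) → R} {c : R} :
    (∀ x : Fin (2 * n + 2 * m), (x.val + 1) % 2 = 1 →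
      coboundary R (annularGamma (2 * n) (2 * m)) f x = c) ↔
    ∀ i (h : 2 * i + 1 < 2 * n + 2 * m),
      f ⟨2 * i + 1, h⟩ - f ⟨2 * i, Nat.lt_of_succ_lt h⟩ = c := by
  have hnext (i : ℕ) (h : 2 * i + 1 < 2 * n + 2 * m) :
      annularGamma (2 * n) (2 * m) ⟨2 * i, Nat.lt_of_succ_lt h⟩ = ⟨2 * i + 1, h⟩ :=
    Fin.ext (val_annularGamma (by dsimp only; lia) (by dsimp only; lia))
  constructor
  · intro hf i h
    rw [← hnext]
    exact hf ⟨2 * i, Nat.lt_of_succ_lt h⟩ (by dsimp only; lia)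
  · intro hf x hx
    have hlt : 2 * (x.val / 2) + 1 < 2 * n + 2 * m := by lia
    have hxi : x = ⟨2 * (x.val / 2), Nat.lt_of_succ_lt hlt⟩ := Fin.ext (by dsimp only; lia)
    rw [hxi, ← hf _ hlt, ← hnext]
    rfl

theorem AnnularNC.graphBipartite_iff {σ : Perm (Fin (2 * n + 2 * m))}
    (hσ : AnnularNC (2 * n) (2 * m) σ) (hn : 1 ≤ n) (hm : 1 ≤ m) :
    GraphBipartite (annularGamma (2 * n) (2 * m) * σ⁻¹) ↔
      ∃ w ∈ cycleSumZero (ZMod 2) σ,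
        Set.EqOn w 1 {x | (x.val + 1) % 2 = 1} ∧
          w ∈ cycleSumZero (ZMod 2) (annularGamma (2 * n) (2 * m)) := by
  simp only [graphBipartite_iff_exists_invariantFunctions, ← forall_coboundary_annularGamma_iff]
  have hmap (w : Fin (2 * n + 2 * m) → ZMod 2) :=
    SetLike.ext_iff.1 (hσ.map_coboundary_invariantFunctions (ZMod 2) (by lia) (by lia)) w
  constructor
  · rintro ⟨f, hf, hodd⟩
    obtain ⟨hwσ, hwγ⟩ := (hmap _).1 (Submodule.mem_map_of_mem hf)
    exact ⟨_, hwσ, hodd, hwγ⟩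
  · rintro ⟨w, hwσ, hodd, hwγ⟩
    obtain ⟨f, hf, rfl⟩ := (hmap w).2 ⟨hwσ, hwγ⟩
    exact ⟨f, hf, hodd⟩

end Bipartite

section ThroughCycle

theorem sum_one_eq_zero_iff_even_ncard {α : Type*} [Fintype α] {P : α → Prop} [DecidablePred P] :
    ∑ y with P y, (1 : ZMod 2) = 0 ↔ Even (Set.ncard {y | P y}) := by
  rw [Finset.sum_const, nsmul_one, ZMod.natCast_eq_zero_iff_even, Set.ncard_eq_toFinset_card',
    Set.toFinset_ofPred]

variable {p q : ℕ} {σ : Perm (Fin (p + q))} {x₀ : Fin (p + q)}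

theorem apply_val_lt_iff_of_unique_through
    (huniq : ∀ x, ((∃ y, σ.SameCycle x y ∧ y.val < p) ∧ ∃ y, σ.SameCycle x y ∧ p ≤ y.val) →
      σ.SameCycle x₀ x)
    {x : Fin (p + q)} (hx : ¬ σ.SameCycle x₀ x) : (σ x).val < p ↔ x.val < p := by
  have hxσ : σ.SameCycle x (σ x) := (Perm.SameCycle.refl σ x).apply_right
  constructor <;> intro h <;> by_contra! hnot
  · exact hx (huniq x ⟨⟨σ x, hxσ, h⟩, x, .refl σ x, hnot⟩)
  · exact hx (huniq x ⟨⟨x, .refl σ x, h⟩, σ x, hxσ, hnot⟩)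

theorem mem_cycleSumZero_annularGamma_iff_even
    (huniq : ∀ x, ((∃ y, σ.SameCycle x y ∧ y.val < p) ∧ ∃ y, σ.SameCycle x y ∧ p ≤ y.val) →
      σ.SameCycle x₀ x)
    {w : Fin (p + q) → ZMod 2} (hw : w ∈ cycleSumZero (ZMod 2) σ)
    (hone : ∀ y, σ.SameCycle x₀ y → w y = 1) :
    w ∈ cycleSumZero (ZMod 2) (annularGamma p q) ↔
      Even (Set.ncard {y | σ.SameCycle x₀ y ∧ y.val < p}) ∧
        Even (Set.ncard {y | σ.SameCycle x₀ y ∧ p ≤ y.val}) := by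
  have hcircle (P : Fin (p + q) → Prop) [DecidablePred P]
      (hP : ∀ x, ¬ σ.SameCycle x₀ x → (P (σ x) ↔ P x)) :
      ∑ y with P y, w y = 0 ↔ Even (Set.ncard {y | σ.SameCycle x₀ y ∧ P y}) := by
    rw [sum_eq_sum_sameCycle_of_mem_cycleSumZero hw (x₀ := x₀) (by simpa using hP),
      ← sum_one_eq_zero_iff_even_ncard, Finset.filter_filter]
    simp only [and_comm (a := P _)]
    rw [Finset.sum_congr rfl fun y hy => hone y (Finset.mem_filter.1 hy).2.1]
  rw [mem_cycleSumZero_annularGamma,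
    hcircle (·.val < p) fun x hx => apply_val_lt_iff_of_unique_through huniq hx,
    hcircle (p ≤ ·.val) fun x hx => by
      simpa using (apply_val_lt_iff_of_unique_through huniq hx).not]

theorem SeparatesEven.exists_mem_cycleSumZero_iff {N : ℕ} {σ : Perm (Fin N)}
    (hsep : SeparatesEven σ) :
    (∃ w ∈ cycleSumZero (ZMod 2) σ, Set.EqOn w 1 {x | (x.val + 1) % 2 = 1}) ↔
      ∀ x, (∀ y, σ.SameCycle x y → (y.val + 1) % 2 = 1) →
        Even (Set.ncard {y | σ.SameCycle x y}) := by
  have hinjOn : ∀ x ∉ {x : Fin N | (x.val + 1) % 2 = 1}, ∀ y ∉ {y : Fin N | (y.val + 1) % 2 = 1},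
      σ.SameCycle x y → x = y := fun x hx y hy h =>
    hsep x y h (Nat.mod_two_ne_one.1 hx) (Nat.mod_two_ne_one.1 hy)
  rw [exists_mem_cycleSumZero_eqOn_iff hinjOn]
  simp only [Pi.one_apply, sum_one_eq_zero_iff_even_ncard, Set.mem_ofPred_eq]

end ThroughCycle

theorem stmt_6 (n m : ℕ) (hn : 1 ≤ n) (hm : 1 ≤ m)
    (σ : Equiv.Perm (Fin (2 * n + 2 * m)))
    (hσ : AnnularNC (2 * n) (2 * m) σ)
    (hsep : SeparatesEven σ)
    (x0 : Fin (2 * n + 2 * m))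
    (hthru : (∃ y, σ.SameCycle x0 y ∧ y.val < 2 * n) ∧
      (∃ y, σ.SameCycle x0 y ∧ 2 * n ≤ y.val))
    (huniq : ∀ x : Fin (2 * n + 2 * m),
      ((∃ y, σ.SameCycle x y ∧ y.val < 2 * n) ∧
        (∃ y, σ.SameCycle x y ∧ 2 * n ≤ y.val)) → σ.SameCycle x0 x)
    (hodd : ∀ y : Fin (2 * n + 2 * m), σ.SameCycle x0 y → (y.val + 1) % 2 = 1)
    (l s : ℕ)
    (hl : l = Set.ncard {y | σ.SameCycle x0 y ∧ y.val < 2 * n})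
    (hs : s = Set.ncard {y | σ.SameCycle x0 y ∧ 2 * n ≤ y.val}) :
    GraphBipartite (annularGamma (2 * n) (2 * m) * σ⁻¹) ↔
      ((∀ x : Fin (2 * n + 2 * m),
        (∀ y : Fin (2 * n + 2 * m), σ.SameCycle x y → (y.val + 1) % 2 = 1) →
        Even (Set.ncard {y | σ.SameCycle x y})) ∧ Even l ∧ Even s) := by
  rw [hσ.graphBipartite_iff hn hm, ← hsep.exists_mem_cycleSumZero_iff]
  have hcircles {w : Fin (2 * n + 2 * m) → ZMod 2} (hw : w ∈ cycleSumZero (ZMod 2) σ)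
      (hw_odd : Set.EqOn w 1 {x | (x.val + 1) % 2 = 1}) :
      w ∈ cycleSumZero (ZMod 2) (annularGamma (2 * n) (2 * m)) ↔ Even l ∧ Even s := by
    rw [hl, hs]
    exact mem_cycleSumZero_annularGamma_iff_even huniq hw fun y hy => hw_odd (hodd y hy)
  constructor
  · rintro ⟨w, hw, hw_odd, hwγ⟩
    exact ⟨⟨w, hw, hw_odd⟩, (hcircles hw hw_odd).1 hwγ⟩
  · rintro ⟨⟨w, hw, hw_odd⟩, heven⟩
    exact ⟨w, hw, hw_odd, (hcircles hw hw_odd).2 heven⟩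
end

section
/- Let n, m ≥ 1. The number of fixed-point-free involutions π belonging to J_{2n,2m} equals (n+m−1)!/((n−1)!(m−1)!) = m·binom(n+m−1, n−1) if n+m is even, and equals 0 if n+m is odd. -/
/-!
Attach to each block the even number `2i` and its successor on the circle, so that the rotation of
the numbers covers the rotation `ρ` of the blocks. A pairing `π` joining the two circles such that
every cycle of `π⁻¹γ` contains exactly one even number then has the same support `R` on the even
and on the odd numbers, and is determined by its action on the even ones. That action is a
reflection: an involution exchanging the two circles and reversing the cyclic order induced by `ρ`
on `R`. A reflection is determined by `R`, which has equally many points on both circles, and by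
the image `t` of one point of `R`. So one counts pairs of a balanced set `R` and a point `t ∈ R` of
the second circle; `R ↦ R ∆ L`, where `L` is the first circle, turns the sets `R` for given `t`
into the `n`-element sets containing `t`, of which there are `(n + m - 1).choose (n - 1)`.

For such a pairing, let `ι` exchange the two numbers of each block. Half of the numbers, `n + m` of
them, form a single cycle of `π * ι`, and the sets that witness bipartiteness are those that
alternate along it, so they exist if `n + m` is even. Conversely `π` acts on a witness, which has
`n + m` elements, without fixed points.
-/

namespace AnnularPairing

open Equiv

section SameCycle

variable {X Y Z : Type*} {σ : Perm X} {τ : Perm Y} {x y : X}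

theorem sameCycle_map {f : X → Y} (h : ∀ z, τ.SameCycle (f z) (f (σ z)))
    (hxy : σ.SameCycle x y) : τ.SameCycle (f x) (f y) := by
  obtain ⟨k, rfl⟩ := hxy
  induction k with
  | zero => exact .rfl
  | succ k ih =>
    rw [add_comm, zpow_one_add, Perm.mul_apply]
    exact ih.trans (h _)
  | pred k ih =>
    refine ih.trans (.symm ?_)
    simpa only [← Perm.mul_apply, ← zpow_one_add, add_sub_cancel] using h ((σ ^ (-k - 1 : ℤ)) x)

theorem sameCycle_map_of_semiconj {f : X → Y} (h : Function.Semiconj f σ τ)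
    (hxy : σ.SameCycle x y) : τ.SameCycle (f x) (f y) :=
  sameCycle_map (fun z ↦ h z ▸ Perm.sameCycle_apply_right.2 .rfl) hxy

theorem sameCycle_permCongr_iff (e : X ≃ Y) :
    (e.permCongr σ).SameCycle (e x) (e y) ↔ σ.SameCycle x y := by
  refine ⟨fun h ↦ ?_, sameCycle_map_of_semiconj fun z ↦ by simp⟩
  simpa using sameCycle_map_of_semiconj (f := e.symm) (τ := σ) (fun z ↦ by simp) h

theorem eq_of_sameCycle {f : X → Z} (h : ∀ z, f (σ z) = f z) (hxy : σ.SameCycle x y) :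
    f x = f y :=
  Perm.sameCycle_one.1 <| sameCycle_map_of_semiconj h hxy

theorem sameCycle_iff_of_involutive (hσ : ∀ z, σ (σ z) = z) :
    σ.SameCycle x y ↔ y = x ∨ y = σ x := by
  refine ⟨fun h ↦ ?_, ?_⟩
  · have key : ({x, σ x} : Set X) = {y, σ y} :=
      eq_of_sameCycle (f := fun z ↦ ({z, σ z} : Set X))
        (fun z ↦ by rw [hσ, Set.pair_comm]) h
    have : y ∈ ({x, σ x} : Set X) := key ▸ Set.mem_insert y _
    simpa using this
  · rintro (rfl | rfl) <;> simp [Perm.SameCycle.refl]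

end SameCycle

section FirstReturn

variable {B : Type*} {ρ : Perm B} {R : Finset B} {x y : B}

/-- The first point of `R` met by the forward orbit `x, ρ x, ρ² x, …`; its value is `x` itself
if the orbit avoids `R`. -/
noncomputable def firstHit (ρ : Perm B) (R : Finset B) (x : B) : B :=
  (ρ ^ sInf {k : ℕ | (ρ ^ k) x ∈ R}) x

theorem sameCycle_firstHit : ρ.SameCycle x (firstHit ρ R x) :=
  ⟨(sInf {k : ℕ | (ρ ^ k) x ∈ R} : ℕ), by rw [zpow_natCast, firstHit]⟩

theorem firstHit_of_mem (hx : x ∈ R) : firstHit ρ R x = x := by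
  have : sInf {k : ℕ | (ρ ^ k) x ∈ R} = 0 := Nat.sInf_eq_zero.2 (.inl hx)
  rw [firstHit, this, pow_zero, Perm.one_apply]

variable [Finite B]

theorem firstHit_mem (h : ∃ y ∈ R, ρ.SameCycle x y) : firstHit ρ R x ∈ R := by
  obtain ⟨y, hy, hxy⟩ := h
  obtain ⟨k, rfl⟩ := hxy.exists_nat_pow_eq
  exact Nat.sInf_mem (s := {k : ℕ | (ρ ^ k) x ∈ R}) ⟨k, hy⟩

theorem firstHit_apply_of_notMem (h : ∃ y ∈ R, ρ.SameCycle x y) (hx : x ∉ R) :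
    firstHit ρ R (ρ x) = firstHit ρ R x := by
  obtain ⟨y, hy, hxy⟩ := h
  obtain ⟨k, rfl⟩ := hxy.exists_nat_pow_eq
  have hpos : 0 < sInf {k : ℕ | (ρ ^ k) x ∈ R} :=
    Nat.pos_of_ne_zero fun h0 ↦ by
      rcases Nat.sInf_eq_zero.1 h0 with h | h
      · exact hx h
      · exact (h ▸ hy : k ∈ (∅ : Set ℕ))
  have hsucc := Nat.sInf_add (p := fun k ↦ (ρ ^ k) x ∈ R) hpos
  simp only [pow_succ, Perm.mul_apply] at hsucc
  rw [firstHit, firstHit, ← hsucc, pow_succ, Perm.mul_apply]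

theorem hits_induction {Q : B → Prop} (hx : ∃ y ∈ R, ρ.SameCycle x y)
    (mem : ∀ z ∈ R, Q z) (step : ∀ z ∉ R, (∃ y ∈ R, ρ.SameCycle z y) → Q (ρ z) → Q z) :
    Q x := by
  obtain ⟨y, hy, hxy⟩ := hx
  obtain ⟨k, rfl⟩ := hxy.exists_nat_pow_eq
  induction k generalizing x with
  | zero => exact mem x hy
  | succ k ih =>
    by_cases hxR : x ∈ R
    · exact mem x hxR
    · exact step x hxR ⟨_, hy, hxy⟩ <|
        ih (by rwa [pow_succ] at hy) (by rwa [pow_succ, ← Perm.sameCycle_apply_left] at hxy)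

theorem exists_mem_firstHit_apply_eq (hy : y ∈ R) : ∃ x ∈ R, firstHit ρ R (ρ x) = y := by
  suffices ∃ x ∈ R, firstHit ρ R (ρ x) = firstHit ρ R (ρ (ρ⁻¹ y)) by
    simpa [firstHit_of_mem hy] using this
  refine hits_induction (ρ := ρ⁻¹) (R := R) (x := ρ⁻¹ y)
    (Q := fun w ↦ ∃ x ∈ R, firstHit ρ R (ρ x) = firstHit ρ R (ρ w))
    ⟨y, hy, by simp [Perm.SameCycle.refl]⟩ (fun z hz ↦ ⟨z, hz, rfl⟩) fun z hz hits ih ↦ ?_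
  rw [firstHit_apply_of_notMem (by simpa using hits) hz]
  simpa using ih

variable [DecidableEq B]

/-- The permutation induced by `ρ` on `R`: a point of `R` goes to the next point of `R` on its
cycle, and the points outside `R` are fixed. -/
noncomputable def firstReturn (ρ : Perm B) (R : Finset B) : Perm B :=
  Equiv.ofBijective (fun x ↦ if x ∈ R then firstHit ρ R (ρ x) else x) <|
    Finite.surjective_iff_bijective.1 fun y ↦ by
      by_cases hy : y ∈ R
      · obtain ⟨x, hx, hxy⟩ := exists_mem_firstHit_apply_eq (ρ := ρ) hy
        exact ⟨x, by rwa [if_pos hx]⟩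
      · exact ⟨y, if_neg hy⟩

theorem firstReturn_of_mem (hx : x ∈ R) : firstReturn ρ R x = firstHit ρ R (ρ x) :=
  if_pos hx

theorem firstReturn_of_notMem (hx : x ∉ R) : firstReturn ρ R x = x :=
  if_neg hx

theorem firstReturn_mem (hx : x ∈ R) : firstReturn ρ R x ∈ R := by
  rw [firstReturn_of_mem hx]
  exact firstHit_mem ⟨x, hx, by simp [Perm.SameCycle.refl]⟩

theorem sameCycle_firstReturn : ρ.SameCycle x (firstReturn ρ R x) := by
  by_cases hx : x ∈ R
  · rw [firstReturn_of_mem hx]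
    exact Perm.sameCycle_apply_left.1 sameCycle_firstHit
  · rw [firstReturn_of_notMem hx]

theorem sameCycle_firstReturn_iff (hx : x ∈ R) (hy : y ∈ R) :
    (firstReturn ρ R).SameCycle x y ↔ ρ.SameCycle x y := by
  refine ⟨sameCycle_map (f := id) fun _ ↦ sameCycle_firstReturn, fun h ↦ ?_⟩
  let S : Set B := {w | ρ.SameCycle x w ∧ (firstReturn ρ R).SameCycle x (firstHit ρ R w)}
  have hS : Set.MapsTo ρ S S := by
    rintro w ⟨hxw, hw⟩
    refine ⟨Perm.sameCycle_apply_right.2 hxw, ?_⟩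
    by_cases hwR : w ∈ R
    · rw [firstHit_of_mem hwR] at hw
      rwa [← firstReturn_of_mem hwR, Perm.sameCycle_apply_right]
    · rwa [firstHit_apply_of_notMem ⟨x, hx, hxw.symm⟩ hwR]
  obtain ⟨k, rfl⟩ := h.exists_nat_pow_eq
  have := (hS.perm_pow k (x := x) ⟨.rfl, by rw [firstHit_of_mem hx]⟩).2
  rwa [firstHit_of_mem hy] at this

end FirstReturn

section Model

variable {B : Type*}

/-- Two consecutive numbers are attached to each `i : B`: the even number `(i, true)` and its odd
successor `(i, false)`.  If `ρ` rotates `B` circle by circle, `doubled ρ` rotates the numbers. -/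
def doubled (ρ : Perm B) : Perm (B × Bool) where
  toFun
    | (i, true) => (i, false)
    | (i, false) => (ρ i, true)
  invFun
    | (i, true) => (ρ.symm i, false)
    | (i, false) => (i, true)
  left_inv := by rintro ⟨i, _ | _⟩ <;> simp
  right_inv := by rintro ⟨i, _ | _⟩ <;> simp

@[simp] theorem doubled_apply_true (ρ : Perm B) (i : B) : doubled ρ (i, true) = (i, false) := rfl

@[simp] theorem doubled_apply_false (ρ : Perm B) (i : B) : doubled ρ (i, false) = (ρ i, true) := rfl

/-- The involution exchanging an odd number with its even successor, i.e. the two elements of a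
block `{2i - 1, 2i}`. -/
def blockSwap (ρ : Perm B) : Perm (B × Bool) where
  toFun
    | (i, true) => (ρ.symm i, false)
    | (i, false) => (ρ i, true)
  invFun
    | (i, true) => (ρ.symm i, false)
    | (i, false) => (ρ i, true)
  left_inv := by rintro ⟨i, _ | _⟩ <;> simp
  right_inv := by rintro ⟨i, _ | _⟩ <;> simp

@[simp] theorem blockSwap_apply_false (ρ : Perm B) (i : B) :
    blockSwap ρ (i, false) = (ρ i, true) := rfl

@[simp] theorem blockSwap_apply_true (ρ : Perm B) (i : B) :
    blockSwap ρ (ρ i, true) = (i, false) := congr(($(ρ.symm_apply_apply i), false))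

theorem blockSwap_involutive (ρ : Perm B) (x : B × Bool) : blockSwap ρ (blockSwap ρ x) = x :=
  (blockSwap ρ).left_inv x

/-- A pairing of the numbers on two circles, told apart by `c`, that joins the circles and for
which each cycle of `π⁻¹ * doubled ρ` contains exactly one even number. -/
structure IsEvenPairing (ρ : Perm B) (c : B → Bool) (π : Perm (B × Bool)) : Prop where
  involutive : ∀ x, π (π x) = x
  apply_ne : ∀ x, π x ≠ x
  cross : ∃ x, c (π x).1 ≠ c x.1
  existsUnique : ∀ x, ∃! i, (π⁻¹ * doubled ρ).SameCycle x (i, true)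

/-- An involution of `B` whose moved points change circle, and which reverses the cyclic order
that `ρ` induces on its support. -/
structure IsReflection [Fintype B] [DecidableEq B] (ρ : Perm B) (c : B → Bool) (a : Perm B) :
    Prop where
  involutive : ∀ i, a (a i) = i
  ne_one : a ≠ 1
  color : ∀ i ∈ a.support, c (a i) = !c i
  semiconj : SemiconjBy a (firstReturn ρ a.support) (firstReturn ρ a.support)⁻¹

theorem sameCycle_apply_firstHit [Finite B] {ρ : Perm B} {R : Finset B} {i : B}
    {π σ : Perm (B × Bool)} {a : B → B}
    (hσ : ∀ i, σ (i, false) = π (ρ i, true)) (hmem : ∀ i ∈ R, π (i, true) = (a i, true))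
    (hnotMem : ∀ i ∉ R, π (i, true) = (i, false)) (hi : ∃ j ∈ R, ρ.SameCycle i j) :
    σ.SameCycle (π (i, true)) (a (firstHit ρ R i), true) := by
  refine hits_induction (Q := fun i ↦ σ.SameCycle (π (i, true)) (a (firstHit ρ R i), true)) hi
    (fun j hj ↦ ?_) fun j hj hits ih ↦ ?_
  · rw [hmem j hj, firstHit_of_mem hj]
  · rw [← firstHit_apply_of_notMem hits hj, hnotMem j hj]
    exact Perm.sameCycle_apply_left.1 (hσ j ▸ ih)

end Model

section PairingOfReflection

variable {B : Type*} [Fintype B] [DecidableEq B] {ρ a : Perm B} {c : B → Bool} {i : B}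

namespace IsReflection

theorem apply_firstReturn (ha : IsReflection ρ c a) (i : B) :
    a (firstReturn ρ a.support (a (firstReturn ρ a.support i))) = i := by
  have h := congr($(ha.semiconj.eq) (a (firstReturn ρ a.support i)))
  simpa [ha.involutive] using h

theorem exists_mem_support_sameCycle (hρ : ∀ x y, ρ.SameCycle x y ↔ c x = c y)
    (ha : IsReflection ρ c a) (x : B) : ∃ y ∈ a.support, ρ.SameCycle x y := by
  obtain ⟨i, hi⟩ := Finset.nonempty_iff_ne_empty.2 (Perm.support_eq_empty_iff.not.2 ha.ne_one)
  simp only [hρ]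
  by_cases hx : c x = c i
  · exact ⟨i, hi, hx⟩
  · exact ⟨a i, Perm.apply_mem_support.2 hi, by rw [ha.color i hi]; exact Bool.eq_not.2 hx⟩

/-- The pairing of a reflection `a`: it acts as `a` on the even numbers in the support, as the
reflection `i ↦ a (r i)`, with `r` the first return map, on the odd ones, and it joins the two
numbers attached to any other point. -/
noncomputable def pairing (ha : IsReflection ρ c a) : Perm (B × Bool) :=
  Function.Involutive.toPerm
    (fun
      | (i, true) => if i ∈ a.support then (a i, true) else (i, false)
      | (i, false) =>
        if i ∈ a.support then (a (firstReturn ρ a.support i), false) else (i, true)) <| by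
    rintro ⟨i, _ | _⟩ <;> by_cases hi : i ∈ a.support
    · have := firstReturn_mem (ρ := ρ) hi
      simp only [if_pos hi, if_pos (Perm.apply_mem_support.2 this), ha.apply_firstReturn]
    · simp only [if_neg hi]
    · simp only [if_pos hi, if_pos (Perm.apply_mem_support.2 hi), ha.involutive]
    · simp only [if_neg hi]

theorem pairing_true_of_mem (ha : IsReflection ρ c a) (hi : i ∈ a.support) :
    ha.pairing (i, true) = (a i, true) := if_pos hi

theorem pairing_true_of_notMem (ha : IsReflection ρ c a) (hi : i ∉ a.support) :
    ha.pairing (i, true) = (i, false) := if_neg hi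

theorem fst_pairing_true (ha : IsReflection ρ c a) (i : B) : (ha.pairing (i, true)).1 = a i := by
  by_cases hi : i ∈ a.support
  · rw [ha.pairing_true_of_mem hi]
  · rw [ha.pairing_true_of_notMem hi, Perm.notMem_support.1 hi]

theorem pairing_false_of_mem (ha : IsReflection ρ c a) (hi : i ∈ a.support) :
    ha.pairing (i, false) = (a (firstReturn ρ a.support i), false) := if_pos hi

theorem pairing_false_of_notMem (ha : IsReflection ρ c a) (hi : i ∉ a.support) :
    ha.pairing (i, false) = (i, true) := if_neg hi

variable (hρ : ∀ x y, ρ.SameCycle x y ↔ c x = c y)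
include hρ

theorem color_apply_firstReturn (ha : IsReflection ρ c a) (hi : i ∈ a.support) :
    c (a (firstReturn ρ a.support i)) = !c i := by
  rw [ha.color _ (firstReturn_mem hi), ← (hρ _ _).1 sameCycle_firstReturn]

theorem pairing_apply_ne (ha : IsReflection ρ c a) (x : B × Bool) : ha.pairing x ≠ x := by
  obtain ⟨i, _ | _⟩ := x <;> by_cases hi : i ∈ a.support
  · intro h
    have := ha.color_apply_firstReturn hρ hi
    rw [ha.pairing_false_of_mem hi, Prod.mk.injEq] at h
    simp [h.1] at this
  · simp [ha.pairing_false_of_notMem hi]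
  · simpa [ha.pairing_true_of_mem hi] using hi
  · simp [ha.pairing_true_of_notMem hi]

theorem existsUnique_sameCycle (ha : IsReflection ρ c a) (x : B × Bool) :
    ∃! i, (ha.pairing⁻¹ * doubled ρ).SameCycle x (i, true) := by
  set σ := ha.pairing⁻¹ * doubled ρ
  have hits := ha.exists_mem_support_sameCycle hρ
  have hσ (y) : σ y = ha.pairing (doubled ρ y) := rfl
  let label (y : B × Bool) : B := if y.2 then y.1 else a (firstHit ρ a.support (ρ y.1))
  have label_apply (y) : label (σ y) = label y := by
    obtain ⟨i, _ | _⟩ := y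
    · by_cases hi : ρ i ∈ a.support
      · simp [label, hσ, ha.pairing_true_of_mem hi, firstHit_of_mem hi]
      · simp [label, hσ, ha.pairing_true_of_notMem hi, firstHit_apply_of_notMem (hits _) hi]
    · by_cases hi : i ∈ a.support
      · have := Perm.apply_mem_support.2 (firstReturn_mem (ρ := ρ) hi)
        simp [label, hσ, ha.pairing_false_of_mem hi, ← firstReturn_of_mem this,
          ha.apply_firstReturn]
      · simp [label, hσ, ha.pairing_false_of_notMem hi]
  have sameCycle_label (y) : σ.SameCycle y (label y, true) := by
    obtain ⟨i, _ | _⟩ := y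
    · exact Perm.sameCycle_apply_left.1 <| sameCycle_apply_firstHit (π := ha.pairing) (fun _ ↦ rfl)
        (fun _ ↦ ha.pairing_true_of_mem) (fun _ ↦ ha.pairing_true_of_notMem) (hits _)
    · exact .rfl
  exact ⟨label x, sameCycle_label x, fun i hi ↦ (eq_of_sameCycle label_apply hi).symm⟩

theorem isEvenPairing (ha : IsReflection ρ c a) : IsEvenPairing ρ c ha.pairing where
  involutive := ha.pairing.left_inv
  apply_ne := ha.pairing_apply_ne hρ
  cross := by
    obtain ⟨i, hi⟩ := Finset.nonempty_iff_ne_empty.2 (Perm.support_eq_empty_iff.not.2 ha.ne_one)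
    exact ⟨(i, true), by simp [ha.pairing_true_of_mem hi, ha.color i hi]⟩
  existsUnique := ha.existsUnique_sameCycle hρ

end IsReflection

end PairingOfReflection

section ReflectionOfPairing

variable {B : Type*} {ρ : Perm B} {c : B → Bool} {π : Perm (B × Bool)} {i : B} {b : Bool}

namespace IsEvenPairing

theorem sameCycle_inj (hπ : IsEvenPairing ρ c π) {j : B}
    (h : (π⁻¹ * doubled ρ).SameCycle (i, true) (j, true)) : j = i :=
  (hπ.existsUnique (i, true)).unique h .rfl

theorem mul_doubled_apply (hπ : IsEvenPairing ρ c π) (x : B × Bool) :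
    (π⁻¹ * doubled ρ) x = π (doubled ρ x) :=
  Perm.inv_eq_iff_eq.2 (hπ.involutive _).symm

theorem fst_apply_of_snd_ne (hπ : IsEvenPairing ρ c π) (h : (π (i, b)).2 ≠ b) :
    (π (i, b)).1 = i := by
  have key {i j : B} (hij : π (i, false) = (j, true)) : j = i := by
    refine hπ.sameCycle_inj ?_
    rw [← hij, ← doubled_apply_true ρ, ← hπ.mul_doubled_apply]
    exact Perm.sameCycle_apply_right.2 .rfl
  cases b <;> rcases hj : π (i, _) with ⟨j, _ | _⟩ <;> simp only [hj, ne_eq, not_true] at h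
  · exact key hj
  · exact (key (hj ▸ hπ.involutive _)).symm

/-- The action of an even pairing on the even (`b = true`) or on the odd (`b = false`) numbers,
where a number paired with one of the other parity is fixed. -/
noncomputable def part (hπ : IsEvenPairing ρ c π) (b : Bool) : Perm B :=
  Function.Involutive.toPerm (fun i ↦ (π (i, b)).1) fun i ↦ by
    by_cases h : (π (i, b)).2 = b
    · have : π (i, b) = ((π (i, b)).1, b) := Prod.ext rfl h
      dsimp only
      rw [← this, hπ.involutive]
    · simp only [hπ.fst_apply_of_snd_ne h]

theorem part_involutive (hπ : IsEvenPairing ρ c π) (i : B) : hπ.part b (hπ.part b i) = i :=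
  (hπ.part b).left_inv i

theorem part_inv (hπ : IsEvenPairing ρ c π) : (hπ.part b)⁻¹ = hπ.part b := rfl

variable [Fintype B] [DecidableEq B]

theorem apply_of_mem (hπ : IsEvenPairing ρ c π) (hi : i ∈ (hπ.part b).support) :
    π (i, b) = (hπ.part b i, b) :=
  Prod.ext rfl <| of_not_not fun h ↦ Perm.mem_support.1 hi (hπ.fst_apply_of_snd_ne h)

theorem apply_of_notMem (hπ : IsEvenPairing ρ c π) (hi : i ∉ (hπ.part b).support) :
    π (i, b) = (i, !b) :=
  have h : (π (i, b)).1 = i := Perm.notMem_support.1 hi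
  Prod.ext h <| Bool.eq_not.2 fun h' ↦ hπ.apply_ne _ (Prod.ext h h')

theorem support_part (hπ : IsEvenPairing ρ c π) :
    (hπ.part false).support = (hπ.part true).support := by
  have key {b : Bool} {i : B} (hi : i ∉ (hπ.part b).support) : i ∉ (hπ.part !b).support := by
    have : π (i, !b) = (i, b) := hπ.apply_of_notMem hi ▸ hπ.involutive (i, b)
    exact Perm.notMem_support.2 congr($(this).1)
  ext i
  exact not_iff_not.1 ⟨key, key⟩

theorem exists_mem_support_sameCycle (hπ : IsEvenPairing ρ c π) (x : B) :
    ∃ y ∈ (hπ.part true).support, ρ.SameCycle x y := by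
  by_contra! h
  let S : Set (B × Bool) := {y | ρ.SameCycle x y.1 ∧ y.2 = false}
  have hS : Set.MapsTo (π⁻¹ * doubled ρ) S S := by
    rintro ⟨y, b⟩ ⟨hxy, rfl : b = false⟩
    have hy : ρ.SameCycle x (ρ y) := Perm.sameCycle_apply_right.2 hxy
    rw [hπ.mul_doubled_apply, doubled_apply_false, hπ.apply_of_notMem fun hR ↦ h _ hR hy]
    exact ⟨hy, rfl⟩
  obtain ⟨i, hi, -⟩ := hπ.existsUnique (x, false)
  obtain ⟨k, hk⟩ := hi.exists_nat_pow_eq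
  have := hS.perm_pow k (x := (x, false)) ⟨.rfl, rfl⟩
  rw [hk] at this
  exact Bool.noConfusion this.2

theorem part_firstReturn_part (hπ : IsEvenPairing ρ c π) (i : B) :
    hπ.part true (firstReturn ρ (hπ.part true).support (hπ.part false i)) = i := by
  by_cases hi : i ∈ (hπ.part false).support
  · set j := hπ.part false i
    have hj : j ∈ (hπ.part true).support := hπ.support_part ▸ Perm.apply_mem_support.2 hi
    have hij : (π⁻¹ * doubled ρ).SameCycle (i, true) (π (ρ j, true)) := by
      rw [← doubled_apply_false, ← hπ.mul_doubled_apply, Perm.sameCycle_apply_right,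
        ← hπ.apply_of_mem hi, ← doubled_apply_true ρ, ← hπ.mul_doubled_apply]
      exact Perm.sameCycle_apply_right.2 .rfl
    have hji := sameCycle_apply_firstHit (fun _ ↦ hπ.mul_doubled_apply _)
      (fun _ ↦ hπ.apply_of_mem) (fun _ ↦ hπ.apply_of_notMem)
      (hπ.exists_mem_support_sameCycle (ρ j))
    rw [← firstReturn_of_mem hj] at hji
    exact hπ.sameCycle_inj (hij.trans hji)
  · have hi' : i ∉ (hπ.part true).support := hπ.support_part ▸ hi
    rw [Perm.notMem_support.1 hi, firstReturn_of_notMem hi', Perm.notMem_support.1 hi']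

theorem part_mul_firstReturn (hπ : IsEvenPairing ρ c π) :
    hπ.part true * firstReturn ρ (hπ.part true).support = hπ.part false := by
  rw [← hπ.part_inv (b := false), eq_inv_iff_mul_eq_one]
  exact Equiv.ext hπ.part_firstReturn_part

theorem semiconj_part (hπ : IsEvenPairing ρ c π) :
    SemiconjBy (hπ.part true) (firstReturn ρ (hπ.part true).support)
      (firstReturn ρ (hπ.part true).support)⁻¹ := by
  have h := hπ.part_mul_firstReturn
  rw [SemiconjBy, h, ← hπ.part_inv (b := false), ← h, mul_inv_rev, hπ.part_inv]

variable (hρ : ∀ x y, ρ.SameCycle x y ↔ c x = c y)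
include hρ

theorem exists_color_part_ne (hπ : IsEvenPairing ρ c π) :
    ∃ i ∈ (hπ.part true).support, c (hπ.part true i) ≠ c i := by
  suffices ∃ i, c (hπ.part true i) ≠ c i from
    this.imp fun i hi ↦ ⟨Perm.mem_support.2 fun h ↦ hi (congrArg c h), hi⟩
  obtain ⟨⟨i, _ | _⟩, hi⟩ := hπ.cross
  · refine ⟨firstReturn ρ (hπ.part true).support i, ?_⟩
    rw [← Perm.mul_apply, hπ.part_mul_firstReturn, ← (hρ _ _).1 sameCycle_firstReturn]
    exact hi
  · exact ⟨i, hi⟩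

theorem color_part (hπ : IsEvenPairing ρ c π) (hi : i ∈ (hπ.part true).support) :
    c (hπ.part true i) = !c i := by
  obtain ⟨z, hzR, hz⟩ := hπ.exists_color_part_ne hρ
  have color_eq {x y : B} (hx : x ∈ (hπ.part true).support) (hy : y ∈ (hπ.part true).support)
      (hxy : c x = c y) : c (hπ.part true x) = c (hπ.part true y) := by
    rw [← hρ, ← sameCycle_firstReturn_iff hx hy] at hxy
    have := sameCycle_map_of_semiconj (f := hπ.part true)
      (τ := (firstReturn ρ (hπ.part true).support)⁻¹) (fun w ↦ congr($hπ.semiconj_part w)) hxy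
    exact (hρ _ _).1 <| sameCycle_map (f := id) (fun _ ↦ sameCycle_firstReturn) <|
      Perm.sameCycle_inv.1 this
  by_cases h : c i = c z
  · rw [color_eq hi hzR h, h, Bool.eq_not.2 hz]
  · have h' : c i = c (hπ.part true z) := by rw [Bool.eq_not.2 h, Bool.eq_not.2 hz]
    rw [color_eq hi (Perm.apply_mem_support.2 hzR) h', hπ.part_involutive, Bool.eq_not.2 h,
      Bool.not_not]

theorem isReflection (hπ : IsEvenPairing ρ c π) : IsReflection ρ c (hπ.part true) where
  involutive _ := hπ.part_involutive _
  ne_one h := by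
    obtain ⟨i, -, hi⟩ := hπ.exists_color_part_ne hρ
    simp [h] at hi
  color _ := hπ.color_part hρ
  semiconj := hπ.semiconj_part

theorem pairing_part (hπ : IsEvenPairing ρ c π) : (hπ.isReflection hρ).pairing = π := by
  have ha := hπ.isReflection hρ
  ext1 ⟨i, _ | _⟩ <;> by_cases hi : i ∈ (hπ.part true).support
  · rw [ha.pairing_false_of_mem hi, ← Perm.mul_apply, hπ.part_mul_firstReturn,
      hπ.apply_of_mem (hπ.support_part ▸ hi)]
  · rw [ha.pairing_false_of_notMem hi, hπ.apply_of_notMem (hπ.support_part ▸ hi), Bool.not_false]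
  · rw [ha.pairing_true_of_mem hi, hπ.apply_of_mem hi]
  · rw [ha.pairing_true_of_notMem hi, hπ.apply_of_notMem hi, Bool.not_true]

end IsEvenPairing

theorem ncard_isEvenPairing_eq_ncard_isReflection [Fintype B] [DecidableEq B]
    (hρ : ∀ x y, ρ.SameCycle x y ↔ c x = c y) :
    {π | IsEvenPairing ρ c π}.ncard = {a | IsReflection ρ c a}.ncard := by
  refine (Set.ncard_congr (fun a (ha : IsReflection ρ c a) ↦ ha.pairing)
    (fun _ ha ↦ IsReflection.isEvenPairing hρ ha)
    (fun a a' (ha : IsReflection ρ c a) (ha' : IsReflection ρ c a') h ↦ ?_) fun π hπ ↦ ?_).symm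
  · ext i
    rw [← ha.fst_pairing_true, h, ha'.fst_pairing_true]
  · exact ⟨hπ.part true, hπ.isReflection hρ, hπ.pairing_part hρ⟩

end ReflectionOfPairing

section MarkedSubsets

open Finset

variable {B : Type*} [DecidableEq B]

theorem card_inter_eq_card_sdiff_iff (R L : Finset B) :
    #(R ∩ L) = #(R \ L) ↔ #(symmDiff R L) = #L := by
  have hsymm : #(symmDiff R L) = #(R \ L) + #(L \ R) := by
    rw [symmDiff_def, sup_eq_union, card_union_of_disjoint disjoint_sdiff_sdiff]
  have hL := card_inter_add_card_sdiff L R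
  rw [inter_comm] at hL
  lia

variable [Fintype B]

theorem card_filter_mem_card_eq_succ (t : B) (k : ℕ) :
    #{S : Finset B | t ∈ S ∧ #S = k + 1} = (Fintype.card B - 1).choose k := by
  rw [← card_univ, ← card_erase_of_mem (mem_univ t), ← card_powersetCard]
  refine card_nbij' (erase · t) (insert t) (fun S hS ↦ ?_) (fun S hS ↦ ?_) (fun S hS ↦ ?_)
    fun S hS ↦ ?_
  · obtain ⟨ht, hcard⟩ := (mem_filter.1 hS).2
    exact mem_powersetCard.2
      ⟨erase_subset_erase t (subset_univ S),
        by rw [card_erase_of_mem ht, hcard, Nat.add_sub_cancel]⟩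
  · obtain ⟨hsub, hcard⟩ := mem_powersetCard.1 hS
    have ht : t ∉ S := fun h ↦ notMem_erase t univ (hsub h)
    exact mem_filter.2
      ⟨mem_univ _, mem_insert_self t S, by rw [card_insert_of_notMem ht, hcard]⟩
  · exact insert_erase (mem_filter.1 hS).2.1
  · exact erase_insert fun h ↦ notMem_erase t univ ((mem_powersetCard.1 hS).1 h)

theorem card_filter_mem_card_inter_eq {L : Finset B} {t : B} (ht : t ∉ L) :
    #{R : Finset B | t ∈ R ∧ #(R ∩ L) = #(R \ L)} = #{S : Finset B | t ∈ S ∧ #S = #L} := by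
  have mem_iff {R : Finset B} :
      (t ∈ R ∧ #(R ∩ L) = #(R \ L)) ↔ t ∈ symmDiff R L ∧ #(symmDiff R L) = #L := by
    simp only [mem_symmDiff, ht, card_inter_eq_card_sdiff_iff, not_false_eq_true, and_true,
      false_and, or_false]
  have hinv := symmDiff_left_involutive L
  refine card_nbij' (symmDiff · L) (symmDiff · L) (fun R hR ↦ ?_) (fun S hS ↦ ?_)
    (fun R _ ↦ hinv R) fun S _ ↦ hinv S
  · exact mem_filter.2 ⟨mem_univ _, mem_iff.1 (mem_filter.1 hR).2⟩
  · exact mem_filter.2 ⟨mem_univ _, mem_iff.2 (by simpa only [hinv S] using (mem_filter.1 hS).2)⟩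

end MarkedSubsets

section CountReflections

open Finset

variable {B : Type*} {c : B → Bool} {R : Finset B} {i : B} {b : Bool}

/-- The points of `R` on the circle `b`. -/
def colorPart (c : B → Bool) (R : Finset B) (b : Bool) : Finset B := {i ∈ R | c i = b}

theorem mem_colorPart : i ∈ colorPart c R b ↔ i ∈ R ∧ c i = b := mem_filter

variable [DecidableEq B] {ρ : Perm B}

theorem isCycleOn_colorPart [Finite B] (hρ : ∀ x y, ρ.SameCycle x y ↔ c x = c y) (R : Finset B)
    (b : Bool) : (firstReturn ρ R).IsCycleOn (colorPart c R b) := by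
  refine ⟨Equiv.bijOn _ fun x ↦ ?_, fun x hx y hy ↦ ?_⟩
  · rw [mem_coe, mem_coe, mem_colorPart, mem_colorPart, ← (hρ _ _).1 sameCycle_firstReturn]
    by_cases hx : x ∈ R
    · simp [hx, firstReturn_mem hx]
    · rw [firstReturn_of_notMem hx]
  · rw [mem_coe, mem_colorPart] at hx hy
    exact (sameCycle_firstReturn_iff hx.1 hy.1).2 ((hρ x y).2 (hx.2.trans hy.2.symm))

theorem exists_map_zpow_eq [Finite B] (hρ : ∀ x y, ρ.SameCycle x y ↔ c x = c y) {u : Bool → B}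
    (hu : ∀ b, u b ∈ colorPart c R b)
    (hR : #(colorPart c R false) = #(colorPart c R true)) : ∃ g : B → B, (∀ x ∉ R, g x = x) ∧
      ∀ (k : ℤ) b, g ((firstReturn ρ R ^ k) (u b)) = (firstReturn ρ R ^ (-k)) (u !b) := by
  set r := firstReturn ρ R
  have hcycle := isCycleOn_colorPart hρ R
  have exists_zpow (x) (hx : x ∈ R) : ∃ k : ℤ, (r ^ k) (u (c x)) = x :=
    (hcycle (c x)).2 (hu _) (mem_colorPart.2 ⟨hx, rfl⟩)
  choose! e he using exists_zpow
  refine ⟨fun x ↦ if x ∈ R then (r ^ (-e x)) (u !c x) else x, fun x hx ↦ if_neg hx, fun k b ↦ ?_⟩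
  have hmem : (r ^ k) (u b) ∈ colorPart c R b := ((hcycle b).1.perm_zpow k).mapsTo (hu b)
  obtain ⟨hmemR, hcolor⟩ := mem_colorPart.1 hmem
  have hmod := he _ hmemR
  rw [hcolor, (hcycle b).zpow_apply_eq_zpow_apply (hu b)] at hmod
  dsimp only
  rw [if_pos hmemR, hcolor, (hcycle !b).zpow_apply_eq_zpow_apply (hu _)]
  have hcard : #(colorPart c R !b) = #(colorPart c R b) := by cases b <;> simp [hR]
  exact hcard ▸ hmod.neg

variable [Fintype B] {a a' : Perm B}

theorem IsReflection.card_colorPart_support (ha : IsReflection ρ c a) :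
    #(colorPart c a.support false) = #(colorPart c a.support true) := by
  have h (b : Bool) : ∀ i ∈ colorPart c a.support b, a i ∈ colorPart c a.support !b := by
    intro i hi
    rw [mem_colorPart] at hi ⊢
    exact ⟨Perm.apply_mem_support.2 hi.1, by rw [ha.color i hi.1, hi.2]⟩
  exact card_nbij' a a (h false) (h true) (fun i _ ↦ ha.involutive i) fun i _ ↦ ha.involutive i

variable (hρ : ∀ x y, ρ.SameCycle x y ↔ c x = c y)
include hρ

theorem IsReflection.eq_of_apply_eq (ha : IsReflection ρ c a) (ha' : IsReflection ρ c a')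
    (hsupp : a.support = a'.support) (hi : i ∈ a.support) (h : a i = a' i) : a = a' := by
  have eq_of_color {j : B} (hj : j ∈ a.support) (hij : c i = c j) : a j = a' j := by
    rw [← hρ, ← sameCycle_firstReturn_iff hi hj] at hij
    obtain ⟨k, rfl⟩ := hij
    have key := congr($((ha.semiconj.zpow_right k).eq) i)
    have key' := congr($((ha'.semiconj.zpow_right k).eq) i)
    simp only [Perm.mul_apply, ← hsupp] at key key'
    rw [key, key', h]
  ext j
  by_cases hj : j ∈ a.support
  · by_cases hij : c i = c j
    · exact eq_of_color hj hij
    · have := eq_of_color (Perm.apply_mem_support.2 hj) <| by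
        rw [ha.color j hj, Bool.eq_not.2 hij]
      rw [← ha'.involutive (a j), ← this, ha.involutive]
  · rw [Perm.notMem_support.1 hj, Perm.notMem_support.1 (hsupp ▸ hj)]

theorem exists_isReflection {u : Bool → B} (hu : ∀ b, u b ∈ colorPart c R b)
    (hR : #(colorPart c R false) = #(colorPart c R true)) :
    ∃ a, IsReflection ρ c a ∧ a.support = R ∧ a (u false) = u true := by
  obtain ⟨g, g_notMem, g_zpow⟩ := exists_map_zpow_eq hρ hu hR
  set r := firstReturn ρ R
  have eq_zpow {x} (hx : x ∈ R) : ∃ k : ℤ, (r ^ k) (u (c x)) = x :=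
    (isCycleOn_colorPart hρ R (c x)).2 (hu _) (mem_colorPart.2 ⟨hx, rfl⟩)
  have g_color (x) (hx : x ∈ R) : c (g x) = !c x := by
    obtain ⟨k, hk⟩ := eq_zpow hx
    have := ((isCycleOn_colorPart hρ R _).1.perm_zpow (-k)).mapsTo (hu !c x)
    rw [← hk, g_zpow, hk]
    exact (mem_colorPart.1 this).2
  have g_invol : Function.Involutive g := fun x ↦ by
    by_cases hx : x ∈ R
    · obtain ⟨k, hk⟩ := eq_zpow hx
      rw [← hk, g_zpow, g_zpow, neg_neg, Bool.not_not]
    · rw [g_notMem x hx, g_notMem x hx]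
  have hsupp : g_invol.toPerm.support = R := by
    ext x
    rw [Perm.mem_support, Function.Involutive.coe_toPerm]
    exact ⟨fun h ↦ by_contra fun hx ↦ h (g_notMem x hx), fun hx h ↦ by simpa [h] using g_color x hx⟩
  have hsemi : SemiconjBy g_invol.toPerm r r⁻¹ := Equiv.ext fun x ↦ by
    simp only [Perm.mul_apply, Function.Involutive.coe_toPerm]
    by_cases hx : x ∈ R
    · obtain ⟨k, hk⟩ := eq_zpow hx
      rw [← hk, ← Perm.mul_apply, ← zpow_one_add, g_zpow, g_zpow, ← Perm.mul_apply, neg_add,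
        zpow_add, zpow_neg_one]
    · rw [firstReturn_of_notMem hx, g_notMem x hx, eq_comm, Perm.inv_eq_iff_eq,
        firstReturn_of_notMem hx]
  refine ⟨g_invol.toPerm, ⟨g_invol, ?_, hsupp ▸ g_color, hsupp ▸ hsemi⟩, hsupp, ?_⟩
  · rw [Ne, ← Perm.support_eq_empty_iff, hsupp]
    exact ne_empty_of_mem (mem_colorPart.1 (hu true)).1
  · simpa using g_zpow 0 false

open Classical in
theorem card_isReflection_support_eq (R : Finset B) :
    #{a | IsReflection ρ c a ∧ a.support = R} =
      if #(colorPart c R false) = #(colorPart c R true) then #(colorPart c R true) else 0 := by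
  split_ifs with hR
  · rcases (colorPart c R false).eq_empty_or_nonempty with hempty | ⟨s, hs⟩
    · rw [← hR, hempty, card_empty, card_eq_zero, filter_eq_empty_iff]
      rintro a - ⟨ha, rfl⟩
      rw [hempty, card_empty, eq_comm, card_eq_zero] at hR
      refine ha.ne_one (Perm.support_eq_empty_iff.1 <| eq_empty_of_forall_notMem fun i hi ↦ ?_)
      have : i ∈ colorPart c a.support (c i) := mem_colorPart.2 ⟨hi, rfl⟩
      cases hc : c i <;> simp [hc, hempty, hR] at this
    · obtain ⟨hsR, hsc⟩ := mem_colorPart.1 hs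
      refine card_nbij (fun a ↦ a s) (fun a h ↦ ?_) (fun a h a' h' has ↦ ?_) fun t ht ↦ ?_
      · obtain ⟨ha, rfl⟩ := (mem_filter.1 h).2
        exact mem_colorPart.2
          ⟨Perm.apply_mem_support.2 hsR, (ha.color s hsR).trans (by rw [hsc, Bool.not_false])⟩
      · obtain ⟨ha, rfl⟩ := (mem_filter.1 h).2
        obtain ⟨ha', hsupp⟩ := (mem_filter.1 h').2
        exact ha.eq_of_apply_eq hρ ha' hsupp.symm hsR has
      · obtain ⟨a, ha, hsupp, hst⟩ := exists_isReflection hρ (u := fun b ↦ cond b t s)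
          (fun b ↦ by cases b <;> assumption) hR
        exact ⟨a, by simpa using ⟨ha, hsupp⟩, hst⟩
  · rw [card_eq_zero, filter_eq_empty_iff]
    rintro a - ⟨ha, rfl⟩
    exact hR ha.card_colorPart_support

theorem ncard_isReflection_eq_sum :
    {a | IsReflection ρ c a}.ncard = ∑ t with c t = true,
      #{R : Finset B | t ∈ R ∧ #(colorPart c R false) = #(colorPart c R true)} := by
  classical
  have hcard := card_eq_sum_card_fiberwise (f := Perm.support)
    (s := ({a | IsReflection ρ c a} : Finset (Perm B))) (t := univ) fun _ _ ↦ mem_univ _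
  simp only [filter_filter, card_isReflection_support_eq hρ, ← sum_filter] at hcard
  rw [← coe_filter_univ, Set.ncard_coe_finset, hcard]
  have double_count := sum_card_bipartiteAbove_eq_sum_card_bipartiteBelow
    (s := ({R | #(colorPart c R false) = #(colorPart c R true)} : Finset (Finset B)))
    (t := ({t | c t = true} : Finset B)) (fun R t ↦ t ∈ R)
  convert double_count using 2
  · congr 1; ext; simp [mem_colorPart, bipartiteAbove, and_comm]
  · congr 1; ext; simp [bipartiteBelow, and_comm]

theorem ncard_isReflection (hleft : ∃ i, c i = false) :
    {a | IsReflection ρ c a}.ncard =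
      #{i | c i = true} * (Fintype.card B - 1).choose (#{i | c i = false} - 1) := by
  set L : Finset B := {i | c i = false}
  have hL : 0 < #L := by
    obtain ⟨i, hi⟩ := hleft
    exact card_pos.2 ⟨i, by simpa [L] using hi⟩
  rw [ncard_isReflection_eq_sum hρ, sum_const_nat fun t ht ↦ ?_]
  have htL : t ∉ L := by simpa [L] using ht
  rw [← card_filter_mem_card_eq_succ t, Nat.sub_add_cancel hL, ← card_filter_mem_card_inter_eq htL]
  have inter_eq (R) : colorPart c R false = R ∩ L := by ext; simp [mem_colorPart, L]
  have sdiff_eq (R) : colorPart c R true = R \ L := by ext; simp [mem_colorPart, L]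
  simp only [inter_eq, sdiff_eq]

end CountReflections

section Bipartition

open Finset

variable {X : Type*} {A : Set X}

/-- A two-colouring, given by the colour class `A`, of the graph whose vertices are the cycles of
`π` and whose edges join the cycles of `x` and `ι x`. -/
def IsBipartition (π ι : Perm X) (A : Set X) : Prop :=
  (∀ x, π x ∈ A ↔ x ∈ A) ∧ ∀ x, ι x ∈ A ↔ x ∉ A

theorem even_card_of_involution {s : Finset X} {f : X → X} (hmem : ∀ x ∈ s, f x ∈ s)
    (hinv : ∀ x ∈ s, f (f x) = x) (hne : ∀ x ∈ s, f x ≠ x) : Even #s := by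
  have h : ∑ _ ∈ s, (1 : ZMod 2) = 0 :=
    sum_involution (fun x _ ↦ f x) (fun _ _ ↦ CharTwo.add_self_eq_zero 1)
      (fun x hx _ ↦ hne x hx) hmem hinv
  rwa [sum_const, nsmul_one, ZMod.natCast_eq_zero_iff_even] at h

theorem IsBipartition.four_dvd_card [Fintype X] {π ι : Perm X} (hinv : ∀ x, π (π x) = x)
    (hne : ∀ x, π x ≠ x) (hA : IsBipartition π ι A) : 4 ∣ Fintype.card X := by
  classical
  have heven : Even #{x | x ∈ A} := even_card_of_involution (f := π)
    (fun x hx ↦ by simpa [hA.1] using hx) (fun x _ ↦ hinv x) fun x _ ↦ hne x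
  have hswap : #{x | x ∈ A} = #{x | x ∉ A} :=
    card_equiv ι fun x ↦ by simp [hA.2]
  have htotal := card_filter_add_card_filter_not (s := univ) (· ∈ A)
  rw [card_univ, ← hswap] at htotal
  obtain ⟨k, hk⟩ := heven
  exact ⟨k, by lia⟩

theorem exists_alternating {τ : Perm X} {s : Finset X} (hs : τ.IsCycleOn s) (heven : Even #s) :
    ∃ A : Set X, ∀ x ∈ s, τ x ∈ A ↔ x ∉ A := by
  rcases s.eq_empty_or_nonempty with rfl | ⟨y, hy⟩
  · exact ⟨∅, by simp⟩
  let A : Set X := {x | ∃ l : ℤ, Even l ∧ (τ ^ l) y = x}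
  have mem_iff (k : ℤ) : (τ ^ k) y ∈ A ↔ Even k := by
    refine ⟨fun ⟨l, hl, h⟩ ↦ ?_, fun hk ↦ ⟨k, hk, rfl⟩⟩
    rw [hs.zpow_apply_eq_zpow_apply hy, Int.modEq_iff_dvd] at h
    have hsub : (2 : ℤ) ∣ k - l := (Int.natCast_dvd_natCast.2 heven.two_dvd).trans h
    exact (Int.even_sub.1 (even_iff_two_dvd.2 hsub)).2 hl
  refine ⟨A, fun x hx ↦ ?_⟩
  obtain ⟨k, rfl⟩ := hs.2 hy hx
  rw [← Perm.mul_apply, ← zpow_one_add, mem_iff, mem_iff, add_comm, Int.even_add_one]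

theorem exists_isBipartition {π ι : Perm X} {Y : Set X} (hπ : ∀ x, π (π x) = x)
    (hι : ∀ x, ι (ι x) = x) (hπY : ∀ x, π x ∈ Y ↔ x ∉ Y) (hιY : ∀ x, ι x ∈ Y ↔ x ∉ Y)
    (hA : ∀ x ∈ Y, (π * ι) x ∈ A ↔ x ∉ A) : ∃ A', IsBipartition π ι A' := by
  simp only [Perm.mul_apply] at hA
  refine ⟨{x | (x ∈ Y → x ∈ A) ∧ (x ∉ Y → ι x ∉ A)}, fun x ↦ ?_, fun x ↦ ?_⟩ <;>
    by_cases hx : x ∈ Y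
  · have := hA (ι (π x)) (by simpa [hπY, hιY] using hx)
    rw [hι, hπ] at this
    simp [hπY, hx, this]
  · simpa [hπY, hx, hι] using hA (ι x) (by simpa [hιY] using hx)
  · simp [hιY, hx, hι]
  · simp [hιY, hx, hι]

end Bipartition

section PairingBipartition

open Finset

variable {B : Type*} [Fintype B] [DecidableEq B] {ρ a : Perm B} {c : B → Bool} {i j : B}
  (hρ : ∀ x y, ρ.SameCycle x y ↔ c x = c y)
include hρ

omit [Fintype B] [DecidableEq B] in
theorem blockSwap_snd_ne_color_iff (x : B × Bool) :
    (blockSwap ρ x).2 ≠ c (blockSwap ρ x).1 ↔ x.2 = c x.1 := by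
  obtain ⟨i, _ | _⟩ := x
  · have : c (ρ i) = c i := (hρ _ _).1 (Perm.sameCycle_apply_left.2 .rfl)
    rw [blockSwap_apply_false, this]
    cases c i <;> simp
  · obtain ⟨j, rfl⟩ := ρ.surjective i
    have : c (ρ j) = c j := (hρ _ _).1 (Perm.sameCycle_apply_left.2 .rfl)
    rw [blockSwap_apply_true, this]
    cases c j <;> simp

namespace IsReflection

theorem sameCycle_false_firstHit (ha : IsReflection ρ c a) (i : B) :
    (ha.pairing * blockSwap ρ).SameCycle (i, false) (a (firstHit ρ a.support (ρ i)), true) :=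
  Perm.sameCycle_apply_left.1 <| sameCycle_apply_firstHit (π := ha.pairing) (fun _ ↦ rfl)
    (fun _ ↦ ha.pairing_true_of_mem) (fun _ ↦ ha.pairing_true_of_notMem)
    (ha.exists_mem_support_sameCycle hρ _)

theorem sameCycle_true_firstHit (ha : IsReflection ρ c a) (i : B) :
    (ha.pairing * blockSwap ρ).SameCycle (i, true) (firstHit ρ a.support i, true) := by
  refine hits_induction
    (Q := fun i ↦ (ha.pairing * blockSwap ρ).SameCycle (i, true) (firstHit ρ a.support i, true))
    (ha.exists_mem_support_sameCycle hρ i) (fun j hj ↦ ?_) fun j hj hits ih ↦ ?_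
  · rw [firstHit_of_mem hj]
  · rw [firstHit_apply_of_notMem hits hj] at ih
    refine .trans ?_ ih
    rw [← ha.pairing_false_of_notMem hj, ← blockSwap_apply_true, ← Perm.mul_apply]
    exact Perm.sameCycle_apply_left.2 .rfl

theorem sameCycle_true_firstReturn (ha : IsReflection ρ c a) (i : B) :
    (ha.pairing * blockSwap ρ).SameCycle (i, true) (firstReturn ρ a.support i, true) := by
  by_cases hi : i ∈ a.support
  · have hai := Perm.apply_mem_support.2 (firstReturn_mem (ρ := ρ) hi)
    have hfalse := ha.sameCycle_false_firstHit hρ (a (firstReturn ρ a.support i))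
    have htrue := ha.sameCycle_true_firstHit hρ (ρ i)
    rw [← firstReturn_of_mem hai, ha.apply_firstReturn, ← ha.pairing_false_of_mem hi,
      ← blockSwap_apply_true, ← Perm.mul_apply, Perm.sameCycle_apply_left] at hfalse
    rw [← firstReturn_of_mem hi] at htrue
    exact hfalse.symm.trans htrue
  · rw [firstReturn_of_notMem hi]

theorem sameCycle_true_of_color_eq (ha : IsReflection ρ c a) (hi : i ∈ a.support)
    (hj : j ∈ a.support) (hij : c i = c j) :
    (ha.pairing * blockSwap ρ).SameCycle (i, true) (j, true) := by
  rw [← hρ, ← sameCycle_firstReturn_iff hi hj] at hij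
  exact sameCycle_map (f := fun i ↦ (i, true)) (ha.sameCycle_true_firstReturn hρ) hij

theorem exists_sameCycle_true (ha : IsReflection ρ c a) {x : B × Bool} (hx : x.2 ≠ c x.1) :
    ∃ j ∈ a.support, c j = false ∧ (ha.pairing * blockSwap ρ).SameCycle x (j, true) := by
  have hits := ha.exists_mem_support_sameCycle hρ
  obtain ⟨i, _ | _⟩ := x
  · have hmem := firstHit_mem (hits (ρ i))
    refine ⟨_, Perm.apply_mem_support.2 hmem, ?_, ha.sameCycle_false_firstHit hρ i⟩
    have hcolor := (hρ i _).1 (Perm.sameCycle_apply_left.1 (sameCycle_firstHit (R := a.support)))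
    rw [ha.color _ hmem, ← hcolor, ← Bool.eq_not.2 hx]
  · refine ⟨_, firstHit_mem (hits i), ?_, ha.sameCycle_true_firstHit hρ i⟩
    rw [← (hρ _ _).1 sameCycle_firstHit]
    exact Bool.eq_not.2 hx.symm

theorem pairing_snd_ne_color_iff (ha : IsReflection ρ c a) (x : B × Bool) :
    (ha.pairing x).2 ≠ c (ha.pairing x).1 ↔ x.2 = c x.1 := by
  obtain ⟨i, _ | _⟩ := x <;> by_cases hi : i ∈ a.support
  · rw [ha.pairing_false_of_mem hi, ha.color_apply_firstReturn hρ hi]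
    cases c i <;> simp
  · rw [ha.pairing_false_of_notMem hi]
    cases c i <;> simp
  · rw [ha.pairing_true_of_mem hi, ha.color i hi]
    cases c i <;> simp
  · rw [ha.pairing_true_of_notMem hi]
    cases c i <;> simp

theorem isCycleOn_pairing_mul_blockSwap (ha : IsReflection ρ c a) :
    (ha.pairing * blockSwap ρ).IsCycleOn {x | x.2 ≠ c x.1} := by
  refine ⟨Equiv.bijOn _ fun x ↦ ?_, fun x hx y hy ↦ ?_⟩
  · rw [Set.mem_ofPred, Set.mem_ofPred, Perm.mul_apply, ha.pairing_snd_ne_color_iff hρ,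
      ← not_iff_not, ← Ne, blockSwap_snd_ne_color_iff hρ, not_ne_iff]
  · obtain ⟨i, hi, hci, hxi⟩ := ha.exists_sameCycle_true hρ hx
    obtain ⟨j, hj, hcj, hyj⟩ := ha.exists_sameCycle_true hρ hy
    exact (hxi.trans (ha.sameCycle_true_of_color_eq hρ hi hj (hci.trans hcj.symm))).trans hyj.symm

theorem exists_isBipartition_pairing (ha : IsReflection ρ c a) (heven : Even (Fintype.card B)) :
    ∃ A, IsBipartition ha.pairing (blockSwap ρ) A := by
  let Y : Finset (B × Bool) := {x | x.2 ≠ c x.1}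
  have hY : #Y = Fintype.card B := by
    refine card_nbij' Prod.fst (fun i ↦ (i, !c i)) (fun _ _ ↦ mem_univ _) (fun i _ ↦ by simp [Y])
      (fun x hx ↦ ?_) fun _ _ ↦ rfl
    exact Prod.ext rfl (Bool.eq_not.2 (mem_filter.1 hx).2).symm
  obtain ⟨A, hA⟩ := exists_alternating (s := Y) (τ := ha.pairing * blockSwap ρ)
    (by simpa [Y] using ha.isCycleOn_pairing_mul_blockSwap hρ) (hY ▸ heven)
  refine exists_isBipartition (Y := Y) ha.pairing.left_inv (blockSwap_involutive ρ)
    (fun x ↦ ?_) (fun x ↦ ?_) hA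
  · simpa [Y] using ha.pairing_snd_ne_color_iff hρ x
  · simpa [Y] using blockSwap_snd_ne_color_iff hρ x

end IsReflection

end PairingBipartition

section CycleCount

open Finset

variable {N : ℕ} {α : Perm (Fin N)}

theorem cycleCount_eq_card_quotient (α : Perm (Fin N)) :
    cycleCount α = Nat.card (Quotient (Perm.SameCycle.setoid α)) := by
  have rel_iff (x y) : Perm.SameCycle.setoid α x y ↔ α.SameCycle y x := Perm.sameCycle_comm
  rw [Nat.card_congr (Setoid.quotientEquivClasses _), Nat.card_coe_set_eq, cycleCount]
  simp only [Setoid.classes, rel_iff]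

theorem cycleCount_eq_card_iff {ι : Type*} [Fintype ι] {g : ι → Fin N} :
    ((∀ i j, α.SameCycle (g i) (g j) → i = j) ∧ cycleCount α = Fintype.card ι) ↔
      ∀ x, ∃! i, α.SameCycle x (g i) := by
  let f (i : ι) : Quotient (Perm.SameCycle.setoid α) := ⟦g i⟧
  have f_eq_iff (x) (i : ι) : f i = ⟦x⟧ ↔ α.SameCycle x (g i) :=
    Quotient.eq.trans Perm.sameCycle_comm
  have hf := Nat.bijective_iff_injective_and_card f
  rw [Function.bijective_iff_existsUnique, Quotient.forall] at hf
  simp only [f_eq_iff] at hf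
  rw [hf, cycleCount_eq_card_quotient, ← Nat.card_eq_fintype_card, eq_comm (a := Nat.card ι)]
  refine and_congr_left' (forall₂_congr fun i j ↦ ?_)
  rw [f_eq_iff, Perm.sameCycle_comm]

theorem two_mul_cycleCount (hα : ∀ x, α (α x) = x) (hne : ∀ x, α x ≠ x) :
    2 * cycleCount α = N := by
  classical
  have card_class (q : Quotient (Perm.SameCycle.setoid α)) : #{x | ⟦x⟧ = q} = 2 := by
    obtain ⟨x, rfl⟩ := q.exists_rep
    rw [← card_pair (hne x).symm]
    congr 1
    ext y
    rw [mem_filter_univ, mem_insert, mem_singleton, ← sameCycle_iff_of_involutive hα]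
    exact Quotient.eq.trans Perm.sameCycle_comm
  have hN := card_eq_sum_card_fiberwise (s := univ) (t := univ)
    (f := fun x ↦ (⟦x⟧ : Quotient (Perm.SameCycle.setoid α))) fun _ _ ↦ mem_univ _
  rw [sum_const_nat fun q _ ↦ card_class q, card_univ, card_univ, Fintype.card_fin] at hN
  rw [cycleCount_eq_card_quotient, Nat.card_eq_fintype_card, mul_comm, ← hN]

end CycleCount

section JointTrans

variable {N : ℕ} {π ρ : Perm (Fin N)} {c : Fin N → Bool}

theorem eq_of_mem_closure {G X Y : Type*} [Group G] [MulAction G X] {S : Set G} {f : X → Y}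
    (hf : ∀ g ∈ S, ∀ x, f (g • x) = f x) {g : G} (hg : g ∈ Subgroup.closure S) (x : X) :
    f (g • x) = f x := by
  induction hg using Subgroup.closure_induction generalizing x with
  | mem g hg => exact hf g hg x
  | one => rw [one_smul]
  | mul g h _ _ ihg ihh => rw [mul_smul, ihg, ihh]
  | inv g _ ih => rw [← ih, smul_inv_smul]

theorem jointTrans_iff (hρ : ∀ x y, ρ.SameCycle x y ↔ c x = c y) (hc : Function.Surjective c) :
    JointTrans π ρ ↔ ∃ x, c (π x) ≠ c x := by
  have color_apply (x) : c (ρ x) = c x := (hρ _ _).1 (Perm.sameCycle_apply_left.2 .rfl)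
  constructor
  · intro h
    by_contra! hπ
    obtain ⟨x, hx⟩ := hc true
    obtain ⟨y, hy⟩ := hc false
    obtain ⟨g, hg, rfl⟩ := h x y
    have := eq_of_mem_closure (f := c) (by simpa using ⟨hπ, color_apply⟩) hg x
    exact Bool.noConfusion (hy.symm.trans (this.trans hx))
  · rintro ⟨x, hx⟩
    let G := Subgroup.closure {π, ρ}
    have orbit_apply {g} (hg : g ∈ ({π, ρ} : Set (Perm (Fin N)))) (y) :
        MulAction.orbit G (g y) = MulAction.orbit G y :=
      MulAction.orbit_smul (⟨g, Subgroup.subset_closure hg⟩ : G) y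
    have orbit_eq_of_color {y z} (hyz : c y = c z) : MulAction.orbit G y = MulAction.orbit G z :=
      eq_of_sameCycle (orbit_apply (by simp)) ((hρ y z).2 hyz)
    have orbit_eq (y) : MulAction.orbit G y = MulAction.orbit G x := by
      by_cases hy : c y = c x
      · exact orbit_eq_of_color hy
      · rw [← orbit_apply (g := π) (by simp) x]
        exact orbit_eq_of_color ((Bool.eq_not.2 hy).trans (Bool.eq_not.2 hx).symm)
    intro y z
    obtain ⟨⟨g, hg⟩, hgy⟩ : z ∈ MulAction.orbit G y := by
      rw [orbit_eq y, ← orbit_eq z]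
      exact MulAction.mem_orbit_self z
    exact ⟨g, hg, hgy⟩

end JointTrans

section Circles

theorem val_finRotate {n : ℕ} (i : Fin n) : (finRotate n i : ℕ) = (i + 1) % n := by
  have := i.neZero
  rw [finRotate_apply, Fin.val_add, Fin.val_one', Nat.add_mod_mod]

theorem sameCycle_finRotate {n : ℕ} (i j : Fin n) : (finRotate n).SameCycle i j := by
  rcases n with _ | _ | n
  · exact i.elim0
  · rw [Fin.fin_one_eq_zero i, Fin.fin_one_eq_zero j]
  · have apply_ne (k : Fin (n + 2)) : finRotate (n + 2) k ≠ k :=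
      Perm.mem_support.1 (by rw [support_finRotate]; exact Finset.mem_univ k)
    exact isCycle_finRotate.sameCycle (apply_ne i) (apply_ne j)

variable {n m : ℕ}

/-- The rotation of two circles of `n` and `m` points; the points stand for the blocks
`{2i - 1, 2i}` of numbers on circles of `2n` and `2m` numbers. -/
def blockRotate (n m : ℕ) : Perm (Fin n ⊕ Fin m) := (finRotate n).sumCongr (finRotate m)

theorem sameCycle_blockRotate_iff (x y : Fin n ⊕ Fin m) :
    (blockRotate n m).SameCycle x y ↔ x.isRight = y.isRight := by
  refine ⟨eq_of_sameCycle (by rintro (i | i) <;> rfl), fun h ↦ ?_⟩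
  rcases x with i | i <;> rcases y with j | j
  · exact sameCycle_map_of_semiconj (f := Sum.inl) (fun _ ↦ rfl) (sameCycle_finRotate i j)
  · simp at h
  · simp at h
  · exact sameCycle_map_of_semiconj (f := Sum.inr) (fun _ ↦ rfl) (sameCycle_finRotate i j)

theorem sameCycle_doubled_iff {B : Type*} {ρ : Perm B} {x y : B × Bool} :
    (doubled ρ).SameCycle x y ↔ ρ.SameCycle x.1 y.1 := by
  constructor
  · refine sameCycle_map fun z ↦ ?_
    obtain ⟨i, _ | _⟩ := z
    · exact Perm.sameCycle_apply_right.2 .rfl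
    · exact .rfl
  · have sameCycle_fst (z : B × Bool) : (doubled ρ).SameCycle (z.1, true) z := by
      obtain ⟨i, _ | _⟩ := z
      · exact Perm.sameCycle_apply_right.2 .rfl
      · exact .rfl
    have sameCycle_rotate (i : B) : (doubled ρ).SameCycle (i, true) (ρ i, true) := by
      rw [← doubled_apply_false, Perm.sameCycle_apply_right]
      exact sameCycle_fst (i, false)
    intro h
    exact ((sameCycle_fst x).symm.trans (sameCycle_map (f := (·, true)) sameCycle_rotate h)).trans
      (sameCycle_fst y)

/-- The number with given block and parity: `(i, false)` is sent to the odd number `2i - 1` and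
`(i, true)` to the even number `2i`, which is `2 * i + 1` as an element of `Fin`. -/
def blockEquiv (n m : ℕ) : (Fin n ⊕ Fin m) × Bool ≃ Fin (2 * n + 2 * m) :=
  (finSumFinEquiv.prodCongr finTwoEquiv.symm).trans <|
    finProdFinEquiv.trans <| finCongr (by ring)

theorem val_blockEquiv (i : Fin n ⊕ Fin m) (b : Bool) :
    (blockEquiv n m (i, b) : ℕ) = 2 * finSumFinEquiv i + b.toNat := by
  cases b <;> simp [blockEquiv, finTwoEquiv, add_comm]

theorem blockEquiv_inl (i : Fin n) (b : Bool) : blockEquiv n m (.inl i, b) =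
    finSumFinEquiv (.inl ⟨2 * i + b.toNat, by cases b <;> simp; lia⟩) :=
  Fin.ext (val_blockEquiv _ _)

theorem blockEquiv_inr (j : Fin m) (b : Bool) : blockEquiv n m (.inr j, b) =
    finSumFinEquiv (.inr ⟨2 * j + b.toNat, by cases b <;> simp; lia⟩) :=
  Fin.ext (by rw [val_blockEquiv]; simp [mul_add, add_assoc])

theorem finRotate_two_mul {k : ℕ} (i : Fin k) (h : 2 * i.val < 2 * k) :
    finRotate (2 * k) ⟨2 * i, h⟩ = ⟨2 * i + 1, by lia⟩ :=
  Fin.ext (by rw [val_finRotate, Nat.mod_eq_of_lt]; lia)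

theorem finRotate_two_mul_add_one {k : ℕ} (i : Fin k) (h : 2 * i.val + 1 < 2 * k) :
    finRotate (2 * k) ⟨2 * i + 1, h⟩ = ⟨2 * (finRotate k i).val, by lia⟩ :=
  Fin.ext (by simp only [val_finRotate, ← Nat.mul_mod_mul_left, mul_add_one, add_assoc])

theorem annularGamma_finSumFinEquiv {p q : ℕ} (x : Fin p ⊕ Fin q) :
    annularGamma p q (finSumFinEquiv x) =
      finSumFinEquiv ((finRotate p).sumCongr (finRotate q) x) := by
  rw [annularGamma, permCongr_apply, Equiv.symm_apply_apply]

theorem annularGamma_blockEquiv_false (i : Fin n ⊕ Fin m) :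
    annularGamma (2 * n) (2 * m) (blockEquiv n m (i, false)) = blockEquiv n m (i, true) := by
  rcases i with i | j
  · simp only [blockEquiv_inl, annularGamma_finSumFinEquiv, sumCongr_apply, Sum.map_inl,
      Bool.toNat_false, Bool.toNat_true, add_zero, finRotate_two_mul]
  · simp only [blockEquiv_inr, annularGamma_finSumFinEquiv, sumCongr_apply, Sum.map_inr,
      Bool.toNat_false, Bool.toNat_true, add_zero, finRotate_two_mul]

theorem annularGamma_blockEquiv_true (i : Fin n ⊕ Fin m) :
    annularGamma (2 * n) (2 * m) (blockEquiv n m (i, true)) =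
      blockEquiv n m (blockRotate n m i, false) := by
  rcases i with i | j
  · simp only [blockRotate, blockEquiv_inl, annularGamma_finSumFinEquiv, sumCongr_apply,
      Sum.map_inl, Bool.toNat_false, Bool.toNat_true, add_zero, finRotate_two_mul_add_one]
  · simp only [blockRotate, blockEquiv_inr, annularGamma_finSumFinEquiv, sumCongr_apply,
      Sum.map_inr, Bool.toNat_false, Bool.toNat_true, add_zero, finRotate_two_mul_add_one]

/-- The labelling of the numbers on the two circles for which `annularGamma` is
`doubled (blockRotate n m)`: `(i, true)` is sent to the even number `2i` and `(i, false)` to its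
successor on the circle, which is the odd number of the next block. -/
def pointEquiv (n m : ℕ) : (Fin n ⊕ Fin m) × Bool ≃ Fin (2 * n + 2 * m) :=
  (prodCongrLeft fun b ↦ cond b 1 (blockRotate n m)).trans (blockEquiv n m)

theorem pointEquiv_true (i : Fin n ⊕ Fin m) :
    pointEquiv n m (i, true) = blockEquiv n m (i, true) := rfl

theorem pointEquiv_false (i : Fin n ⊕ Fin m) :
    pointEquiv n m (i, false) = blockEquiv n m (blockRotate n m i, false) := rfl

theorem annularGamma_eq_permCongr :
    annularGamma (2 * n) (2 * m) = (pointEquiv n m).permCongr (doubled (blockRotate n m)) := by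
  rw [← Equiv.symm_apply_eq]
  ext1 ⟨i, _ | _⟩
  · simp [pointEquiv_false, annularGamma_blockEquiv_false, ← pointEquiv_true]
  · simp [pointEquiv_true, annularGamma_blockEquiv_true, ← pointEquiv_false]

theorem even_pointEquiv_add_one_iff (x : (Fin n ⊕ Fin m) × Bool) :
    ((pointEquiv n m x : ℕ) + 1) % 2 = 0 ↔ x.2 = true := by
  obtain ⟨i, _ | _⟩ := x
  · simp [pointEquiv_false, val_blockEquiv]
  · simp [pointEquiv_true, val_blockEquiv]
    lia

end Circles

section Transfer

variable {n m : ℕ} {π : Perm ((Fin n ⊕ Fin m) × Bool)}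

theorem jointTrans_permCongr_iff (hn : 1 ≤ n) (hm : 1 ≤ m) :
    JointTrans ((pointEquiv n m).permCongr π) (annularGamma (2 * n) (2 * m)) ↔
      ∃ x, (π x).1.isRight ≠ x.1.isRight := by
  let e := pointEquiv n m
  rw [jointTrans_iff (c := fun y ↦ (e.symm y).1.isRight), e.exists_congr_left]
  · simp [e]
  · intro x y
    obtain ⟨x, rfl⟩ := e.surjective x
    obtain ⟨y, rfl⟩ := e.surjective y
    rw [annularGamma_eq_permCongr, sameCycle_permCongr_iff, sameCycle_doubled_iff,
      sameCycle_blockRotate_iff, e.symm_apply_apply, e.symm_apply_apply]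
  · rintro (_ | _)
    · exact ⟨e (.inl ⟨0, hn⟩, true), by simp⟩
    · exact ⟨e (.inr ⟨0, hm⟩, true), by simp⟩

theorem separatesEven_permCongr_iff :
    SeparatesEven ((pointEquiv n m).permCongr π) ↔
      ∀ i j, π.SameCycle (i, true) (j, true) → i = j := by
  unfold SeparatesEven
  simp only [← (pointEquiv n m).forall_congr_right, sameCycle_permCongr_iff,
    even_pointEquiv_add_one_iff]
  simp

theorem separatesEven_and_cycleCount_eq_iff :
    (SeparatesEven ((pointEquiv n m).permCongr π) ∧
      cycleCount ((pointEquiv n m).permCongr π) = n + m) ↔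
      ∀ x, ∃! i, π.SameCycle x (i, true) := by
  have := cycleCount_eq_card_iff (α := (pointEquiv n m).permCongr π)
    (g := fun i ↦ pointEquiv n m (i, true))
  simpa [separatesEven_permCongr_iff, ← (pointEquiv n m).forall_congr_right,
    sameCycle_permCongr_iff] using this

theorem bipartSet_iff {π : Perm (Fin (2 * n + 2 * m))} {A : Set (Fin (2 * n + 2 * m))} :
    BipartSet π A ↔ (∀ x, π x ∈ A ↔ x ∈ A) ∧
      ∀ i, blockEquiv n m (i, true) ∈ A ↔ blockEquiv n m (i, false) ∉ A := by
  have false_eq (i : Fin n ⊕ Fin m) (h) :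
      blockEquiv n m (i, false) = ⟨2 * (finSumFinEquiv i).val, h⟩ := Fin.ext (val_blockEquiv _ _)
  have true_eq (i : Fin n ⊕ Fin m) (h) :
      blockEquiv n m (i, true) = ⟨2 * (finSumFinEquiv i).val + 1, h⟩ := Fin.ext (val_blockEquiv _ _)
  rw [BipartSet, ← Equiv.eq_preimage_iff_image_eq, Set.ext_iff]
  refine and_congr (forall_congr' fun x ↦ iff_comm) ⟨fun h i ↦ ?_, fun h k hk ↦ ?_⟩
  · rw [false_eq i (by lia), true_eq i (by lia), ← xor_iff_iff_not, xor_comm]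
    exact h _ (by lia)
  · have key := h (finSumFinEquiv.symm ⟨k, by lia⟩)
    rw [← xor_iff_iff_not, xor_comm, false_eq _ (by simp; lia), true_eq _ (by simp; lia)] at key
    exact (by simpa using key : Xor (⟨2 * k, _⟩ ∈ A) (⟨2 * k + 1, hk⟩ ∈ A))

theorem bipartSet_permCongr_iff {A : Set (Fin (2 * n + 2 * m))} :
    BipartSet ((pointEquiv n m).permCongr π) A ↔
      IsBipartition π (blockSwap (blockRotate n m)) (pointEquiv n m ⁻¹' A) := by
  rw [bipartSet_iff, ← (pointEquiv n m).forall_congr_right]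
  refine and_congr (by simp) ⟨fun h ↦ ?_, fun h i ↦ ?_⟩
  · rintro ⟨i, _ | _⟩
    · exact h (blockRotate n m i)
    · obtain ⟨j, rfl⟩ := (blockRotate n m).surjective i
      rw [blockSwap_apply_true]
      exact iff_not_comm.1 (h (blockRotate n m j))
  · obtain ⟨j, rfl⟩ := (blockRotate n m).surjective i
    exact h (j, false)

theorem graphBipartite_permCongr_iff :
    GraphBipartite ((pointEquiv n m).permCongr π) ↔
      ∃ A, IsBipartition π (blockSwap (blockRotate n m)) A := by
  constructor
  · rintro ⟨A, hA⟩
    exact ⟨_, bipartSet_permCongr_iff.1 hA⟩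
  · rintro ⟨A, hA⟩
    obtain ⟨A, rfl⟩ := (pointEquiv n m).injective.preimage_surjective A
    exact ⟨A, bipartSet_permCongr_iff.2 hA⟩

theorem inv_mul_annularGamma :
    ((pointEquiv n m).permCongr π)⁻¹ * annularGamma (2 * n) (2 * m) =
      (pointEquiv n m).permCongr (π⁻¹ * doubled (blockRotate n m)) := by
  rw [annularGamma_eq_permCongr, inv_mul_eq_iff_eq_mul, ← permCongr_mul, mul_inv_cancel_left]

theorem IsEvenPairing.exists_isBipartition_iff
    (hπ : IsEvenPairing (blockRotate n m) Sum.isRight π) :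
    (∃ A, IsBipartition π (blockSwap (blockRotate n m)) A) ↔ Even (n + m) := by
  constructor
  · rintro ⟨A, hA⟩
    have := hA.four_dvd_card hπ.involutive hπ.apply_ne
    simp only [Fintype.card_prod, Fintype.card_sum, Fintype.card_fin, Fintype.card_bool] at this
    exact even_iff_two_dvd.2 (by lia)
  · intro h
    have hρ := sameCycle_blockRotate_iff (n := n) (m := m)
    rw [← hπ.pairing_part hρ]
    exact (hπ.isReflection hρ).exists_isBipartition_pairing hρ (by simpa using h)

theorem annularNC_and_separatesEven_iff (hn : 1 ≤ n) (hm : 1 ≤ m) (hinv : ∀ x, π (π x) = x)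
    (hne : ∀ x, π x ≠ x) :
    (AnnularNC (2 * n) (2 * m) ((pointEquiv n m).permCongr π) ∧
      SeparatesEven (((pointEquiv n m).permCongr π)⁻¹ * annularGamma (2 * n) (2 * m))) ↔
      IsEvenPairing (blockRotate n m) Sum.isRight π := by
  have hcount : 2 * cycleCount ((pointEquiv n m).permCongr π) = 2 * n + 2 * m := by
    refine two_mul_cycleCount ?_ ?_ <;> simp [← (pointEquiv n m).forall_congr_right, hinv, hne]
  have hsep := separatesEven_and_cycleCount_eq_iff (π := π⁻¹ * doubled (blockRotate n m))
  rw [AnnularNC, jointTrans_permCongr_iff hn hm, inv_mul_annularGamma]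
  constructor
  · rintro ⟨⟨hcross, hcard⟩, heven⟩
    exact ⟨hinv, hne, hcross, hsep.1 ⟨heven, by lia⟩⟩
  · intro hπ
    obtain ⟨heven, hcard⟩ := hsep.2 hπ.existsUnique
    exact ⟨⟨hπ.cross, by lia⟩, heven⟩

theorem memJ_and_pairing_iff (hn : 1 ≤ n) (hm : 1 ≤ m) :
    (memJ n m ((pointEquiv n m).permCongr π) ∧
      ∀ x, (pointEquiv n m).permCongr π ((pointEquiv n m).permCongr π x) = x ∧
        (pointEquiv n m).permCongr π x ≠ x) ↔
      IsEvenPairing (blockRotate n m) Sum.isRight π ∧ Even (n + m) := by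
  rw [← (pointEquiv n m).forall_congr_right]
  simp only [permCongr_apply, symm_apply_apply, ne_eq, EmbeddingLike.apply_eq_iff_eq, forall_and]
  constructor
  · rintro ⟨⟨hnc, hbip, hsep⟩, hinv, hne⟩
    have hπ := (annularNC_and_separatesEven_iff hn hm hinv hne).1 ⟨hnc, hsep⟩
    exact ⟨hπ, hπ.exists_isBipartition_iff.1 (graphBipartite_permCongr_iff.1 hbip)⟩
  · rintro ⟨hπ, heven⟩
    obtain ⟨hnc, hsep⟩ :=
      (annularNC_and_separatesEven_iff hn hm hπ.involutive hπ.apply_ne).2 hπ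
    have hbip := graphBipartite_permCongr_iff.2 (hπ.exists_isBipartition_iff.2 heven)
    exact ⟨⟨hnc, hbip, hsep⟩, hπ.involutive, hπ.apply_ne⟩

end Transfer

section Count

open Finset

variable {n m : ℕ}

theorem ncard_isEvenPairing_blockRotate (hn : 1 ≤ n) :
    {π | IsEvenPairing (blockRotate n m) Sum.isRight π}.ncard =
      m * (n + m - 1).choose (n - 1) := by
  have card_isRight_false : #{i : Fin n ⊕ Fin m | i.isRight = false} = n := by
    have : ({i | i.isRight = false} : Finset (Fin n ⊕ Fin m)) = univ.map .inl := by
      ext (i | i) <;> simp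
    rw [this, card_map, card_univ, Fintype.card_fin]
  have card_isRight_true : #{i : Fin n ⊕ Fin m | i.isRight = true} = m := by
    have : ({i | i.isRight = true} : Finset (Fin n ⊕ Fin m)) = univ.map .inr := by
      ext (i | i) <;> simp
    rw [this, card_map, card_univ, Fintype.card_fin]
  rw [ncard_isEvenPairing_eq_ncard_isReflection sameCycle_blockRotate_iff,
    ncard_isReflection sameCycle_blockRotate_iff ⟨.inl ⟨0, hn⟩, rfl⟩, card_isRight_true,
    card_isRight_false, Fintype.card_sum, Fintype.card_fin, Fintype.card_fin]

theorem mul_choose_eq_factorial_div (hn : 1 ≤ n) (hm : 1 ≤ m) :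
    m * (n + m - 1).choose (n - 1) =
      (n + m - 1).factorial / ((n - 1).factorial * (m - 1).factorial) := by
  refine (Nat.div_eq_of_eq_mul_left (by positivity) ?_).symm
  have h := Nat.choose_mul_factorial_mul_factorial (show n - 1 ≤ n + m - 1 by lia)
  rw [show n + m - 1 - (n - 1) = m by lia, ← Nat.mul_factorial_pred (by lia : m ≠ 0)] at h
  rw [← h]
  ring

end Count

end AnnularPairing

open AnnularPairing

theorem stmt_13 (n m : ℕ) (hn : 1 ≤ n) (hm : 1 ≤ m) :
    Set.ncard {π : Equiv.Perm (Fin (2 * n + 2 * m)) |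
        memJ n m π ∧ ∀ x, π (π x) = x ∧ π x ≠ x} =
      (if Even (n + m) then m * Nat.choose (n + m - 1) (n - 1) else 0) ∧
    m * Nat.choose (n + m - 1) (n - 1) =
      (n + m - 1).factorial / ((n - 1).factorial * (m - 1).factorial) := by
  refine ⟨?_, mul_choose_eq_factorial_div hn hm⟩
  let e := pointEquiv n m
  have himage : {π : Equiv.Perm (Fin (2 * n + 2 * m)) |
      memJ n m π ∧ ∀ x, π (π x) = x ∧ π x ≠ x} = e.permCongr ''
        {π | IsEvenPairing (blockRotate n m) Sum.isRight π ∧ Even (n + m)} := by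
    ext P
    obtain ⟨π, rfl⟩ := e.permCongr.surjective P
    rw [e.permCongr.injective.mem_set_image]
    exact memJ_and_pairing_iff hn hm
  rw [himage, Set.ncard_image_of_injective _ e.permCongr.injective]
  split_ifs with heven
  · simpa only [heven, and_true] using ncard_isEvenPairing_blockRotate hn
  · simp only [heven, and_false, Set.ofPred_false, Set.ncard_empty]
end
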